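/- For all n ≥ 2 and m ≥ 2, TC(F(ℝᵐ, n)) = 2n − 1 if m is odd and TC(F(ℝᵐ, n)) = 2n − 2 if m is even. -/

import Mathlib

open unitInterval ContinuousMap

/-- `HasMotionCover X k`: `X × X` admits a cover by `k` open subsets, on each of which
the path fibration `π : PX → X × X`, `π γ = (γ 0, γ 1)`, admits a continuous section. -/
def HasMotionCover (X : Type*) [TopologicalSpace X] (k : ℕ) : Prop :=
  ∃ U : Fin k → Set (X × X),
    (∀ i, IsOpen (U i)) ∧ (⋃ i, U i) = Set.univ ∧
    ∀ i, ∃ s : C((U i : Set (X × X)), C(I, X)),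
      ∀ p : U i, ((s p) 0, (s p) 1) = (p : X × X)

/-- The topological complexity of `X`: the minimal number `k` such that `X × X` admits a
cover by `k` open subsets over each of which the path fibration admits a continuous
section; `⊤` (infinity) if no such `k` exists. -/
noncomputable def topologicalComplexity (X : Type*) [TopologicalSpace X] : ℕ∞ :=
  sInf ((↑) '' {k : ℕ | HasMotionCover X k})
/-- The configuration space `F(ℝᵐ, n)` of `n` distinct ordered points in Euclidean `m`-space. -/
noncomputable def Conf (m n : ℕ) : Type :=
  {x : Fin n → EuclideanSpace ℝ (Fin m) // Function.Injective x}

noncomputable instance (m n : ℕ) : TopologicalSpace (Conf m n) :=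
  inferInstanceAs (TopologicalSpace {x : Fin n → EuclideanSpace ℝ (Fin m) // Function.Injective x})

/-- The configuration space `F(ℂ, n)` of `n` distinct ordered points in the plane `ℂ`. -/
def ConfC (n : ℕ) : Type :=
  {x : Fin n → ℂ // Function.Injective x}

instance (n : ℕ) : TopologicalSpace (ConfC n) :=
  inferInstanceAs (TopologicalSpace {x : Fin n → ℂ // Function.Injective x})


/-! ### Upper bound -/

section Upper

open Topology

abbrev Eu (m : ℕ) := EuclideanSpace ℝ (Fin m)

def Conf.toFun {m n : ℕ} (x : Conf m n) : Fin n → Eu m := x.1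

theorem Conf.continuous_toFun {m n : ℕ} : Continuous (Conf.toFun (m := m) (n := n)) :=
  continuous_subtype_val

theorem Conf.inj {m n : ℕ} (x : Conf m n) : Function.Injective x.toFun := x.2

def Conf.mk {m n : ℕ} (f : Fin n → Eu m) (h : Function.Injective f) : Conf m n := ⟨f, h⟩

@[simp] theorem Conf.toFun_mk {m n : ℕ} (f : Fin n → Eu m) (h : Function.Injective f) :
    (Conf.mk f h).toFun = f := rfl

theorem Conf.ext' {m n : ℕ} {x y : Conf m n} (h : x.toFun = y.toFun) : x = y := Subtype.ext h

theorem Conf.continuous_mk {m n : ℕ} {A : Type*} [TopologicalSpace A] {f : A → Fin n → Eu m}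
    (hf : Continuous f) (h : ∀ a, Function.Injective (f a)) :
    Continuous (fun a => Conf.mk (f a) (h a)) :=
  hf.subtype_mk h

instance (m n : ℕ) : TopologicalSpace.MetrizableSpace (Conf m n) :=
  inferInstanceAs (TopologicalSpace.MetrizableSpace
    {x : Fin n → EuclideanSpace ℝ (Fin m) // Function.Injective x})

theorem isOpen_injective (m n : ℕ) : IsOpen {f : Fin n → Eu m | Function.Injective f} := by
  have : {f : Fin n → Eu m | Function.Injective f} =
      ⋂ i : Fin n, ⋂ j : Fin n, {f | i ≠ j → f i ≠ f j} := by
    ext f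
    simp only [Set.mem_ofPred_eq, Set.mem_iInter]
    constructor
    · intro h i j hij he
      exact hij (h he)
    · intro h i j he
      by_contra hij
      exact h i j hij he
  rw [this]
  refine isOpen_iInter_of_finite fun i => isOpen_iInter_of_finite fun j => ?_
  by_cases hij : i = j
  · simp [hij]
  · simp only [ne_eq, hij, not_false_eq_true, forall_const]
    exact isOpen_ne_fun (continuous_apply i) (continuous_apply j)

/-- the first / second projection restricted to a subset of `X × X` -/
def resFst {X : Type*} [TopologicalSpace X] (A : Set (X × X)) : C(A, X) :=
  ⟨fun a => a.1.1, by fun_prop⟩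
def resSnd {X : Type*} [TopologicalSpace X] (A : Set (X × X)) : C(A, X) :=
  ⟨fun a => a.1.2, by fun_prop⟩

theorem ext_open {m n : ℕ} (W A : Set (Conf m n × Conf m n)) (hW : IsOpen W) (hA : A ⊆ W)
    (hcl : IsOpen (W \ A)) (h : (resFst A).Homotopic (resSnd A)) :
    ∃ U : Set (Conf m n × Conf m n), IsOpen U ∧ A ⊆ U ∧
      ∃ s : C((U : Set (Conf m n × Conf m n)), C(I, Conf m n)),
        ∀ p : U, ((s p) 0, (s p) 1) = (p : Conf m n × Conf m n) := by
  obtain ⟨H⟩ := h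
  let A' : Set (W × I) := {q | (q.1 : Conf m n × Conf m n) ∈ A}
  have hA' : IsClosed A' := by
    rw [← isOpen_compl_iff]
    have : A'ᶜ = (fun q : W × I => (q.1 : Conf m n × Conf m n)) ⁻¹' (W \ A) := by
      ext q
      simp [A']
    rw [this]
    exact hcl.preimage (by fun_prop)
  let f : C(A', Fin n → Eu m) :=
    ⟨fun q => (H (q.1.2, ⟨q.1.1.1, q.2⟩)).toFun,
      Conf.continuous_toFun.comp (H.continuous.comp (by fun_prop))⟩
  obtain ⟨g, hg⟩ := f.exists_restrict_eq hA'
  have hgA : ∀ (w : W) (t : I) (hw : (w : Conf m n × Conf m n) ∈ A),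
      g (w, t) = (H (t, ⟨w, hw⟩)).toFun := by
    intro w t hw
    have := congrArg (fun φ : C(A', Fin n → Eu m) => φ ⟨(w, t), hw⟩) hg
    simpa [f] using this
  let g' : W × I → (Fin n → Eu m) := fun q =>
    g q + (1 - (q.2 : ℝ)) • (q.1.1.1.toFun - g (q.1, 0)) + (q.2 : ℝ) • (q.1.1.2.toFun - g (q.1, 1))
  have hg'c : Continuous g' := by
    have := Conf.continuous_toFun (m := m) (n := n)
    fun_prop
  have hg'A : ∀ (w : W) (t : I) (hw : (w : Conf m n × Conf m n) ∈ A),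
      g' (w, t) = (H (t, ⟨w, hw⟩)).toFun := by
    intro w t hw
    have h0 : H (0, ⟨w, hw⟩) = w.1.1 := H.apply_zero ⟨w, hw⟩
    have h1 : H (1, ⟨w, hw⟩) = w.1.2 := H.apply_one ⟨w, hw⟩
    simp only [g', hgA w _ hw, h0, h1]
    simp
  let C : Set W := Prod.fst '' {q : W × I | ¬ Function.Injective (g' q)}
  have hC : IsClosed C := by
    apply isClosedMap_fst_of_compactSpace
    rw [← isOpen_compl_iff]
    have := (isOpen_injective m n).preimage hg'c
    convert this using 1
    ext q
    simp
  let U : Set (Conf m n × Conf m n) := Subtype.val '' Cᶜ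
  have hU : IsOpen U := hW.isOpenMap_subtype_val _ hC.isOpen_compl
  have hUW : U ⊆ W := by
    rintro _ ⟨w, _, rfl⟩
    exact w.2
  have hUi : ∀ (p : U) (t : I), Function.Injective (g' (⟨p.1, hUW p.2⟩, t)) := by
    rintro ⟨_, ⟨w, hw, rfl⟩⟩ t
    by_contra hn
    exact hw ⟨(w, t), hn, rfl⟩
  let S : C(U × I, Conf m n) :=
    ⟨fun q => Conf.mk (g' (⟨q.1.1, hUW q.1.2⟩, q.2)) (hUi q.1 q.2),
      Conf.continuous_mk (hg'c.comp (by fun_prop)) _⟩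
  refine ⟨U, hU, ?_, S.curry, ?_⟩
  · intro a ha
    refine ⟨⟨a, hA ha⟩, ?_, rfl⟩
    rintro ⟨⟨w, t⟩, hq, hw⟩
    simp only at hw
    subst hw
    apply hq
    rw [hg'A _ _ ha]
    exact Conf.inj _
  · intro p
    refine Prod.ext ?_ ?_
    · apply Conf.ext'
      simp [S, g']
    · apply Conf.ext'
      simp [S, g']

theorem motionCover_of_levels {m n : ℕ} (r : Conf m n × Conf m n → ℕ) (lo K : ℕ)
    (hlo : ∀ p, lo ≤ r p) (hhi : ∀ p, r p < lo + K)
    (hsc : ∀ p, ∀ᶠ q in 𝓝 p, r p ≤ r q)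
    (hhom : ∀ c, (resFst {p | r p = c}).Homotopic (resSnd {p | r p = c})) :
    HasMotionCover (Conf m n) K := by
  have hop : ∀ c, IsOpen {p | c ≤ r p} := by
    intro c
    rw [isOpen_iff_mem_nhds]
    intro p hp
    filter_upwards [hsc p] with q hq
    exact le_trans hp hq
  have key : ∀ i : Fin K, ∃ U : Set (Conf m n × Conf m n), IsOpen U ∧ {p | r p = lo + i} ⊆ U ∧
      ∃ s : C((U : Set (Conf m n × Conf m n)), C(I, Conf m n)),
        ∀ p : U, ((s p) 0, (s p) 1) = (p : Conf m n × Conf m n) := by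
    intro i
    refine ext_open {p | lo + i ≤ r p} _ (hop _) ?_ ?_ (hhom _)
    · intro p hp
      exact le_of_eq (Eq.symm hp)
    · convert hop (lo + i + 1) using 1
      ext p
      simp only [Set.mem_sdiff, Set.mem_ofPred_eq]
      omega
  choose U hU hAU hs using key
  refine ⟨U, hU, ?_, hs⟩
  rw [Set.eq_univ_iff_forall]
  intro p
  have h1 := hlo p
  have h2 := hhi p
  refine Set.mem_iUnion.2 ⟨⟨r p - lo, by omega⟩, hAU _ ?_⟩
  simp only [Set.mem_ofPred_eq]
  omega

/-- linear homotopies in the configuration space -/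
theorem homotopic_linear {m n : ℕ} {A : Type*} [TopologicalSpace A] (F G : C(A, Conf m n))
    (h : ∀ (a : A) (s : I) (i j : Fin n), i ≠ j →
      (1 - (s : ℝ)) • (F a).toFun i + (s : ℝ) • (G a).toFun i ≠
      (1 - (s : ℝ)) • (F a).toFun j + (s : ℝ) • (G a).toFun j) : F.Homotopic G := by
  have hc := Conf.continuous_toFun (m := m) (n := n)
  refine ⟨⟨⟨fun q => Conf.mk
    (fun i => (1 - (q.1 : ℝ)) • (F q.2).toFun i + (q.1 : ℝ) • (G q.2).toFun i) ?_, ?_⟩, ?_, ?_⟩⟩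
  · intro i j hij
    by_contra hne
    exact h q.2 q.1 i j hne hij
  · apply Conf.continuous_mk
    have h1 : Continuous fun q : I × A => (F q.2).toFun := by fun_prop
    have h2 : Continuous fun q : I × A => (G q.2).toFun := by fun_prop
    fun_prop
  · intro a
    apply Conf.ext'
    simp
  · intro a
    apply Conf.ext'
    simp

end Upper

section Upper2

open Topology

def stdConf {m : ℕ} (n : ℕ) (w : Eu m) (hw : w ≠ 0) : Conf m n :=
  Conf.mk (fun i => ((i : ℕ) : ℝ) • w) (by
    intro i j hij
    have h := smul_left_injective ℝ hw hij
    exact Fin.ext (by exact_mod_cast h))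

def stdMap {m : ℕ} (n : ℕ) {A : Type*} [TopologicalSpace A] (w : A → Eu m) (hw : ∀ a, w a ≠ 0)
    (hc : Continuous w) : C(A, Conf m n) :=
  ⟨fun a => stdConf n (w a) (hw a), Conf.continuous_mk (by fun_prop) _⟩

theorem stdMap_apply {m : ℕ} (n : ℕ) {A : Type*} [TopologicalSpace A] (w : A → Eu m)
    (hw : ∀ a, w a ≠ 0) (hc : Continuous w) (a : A) (i : Fin n) :
    (stdMap n w hw hc a).toFun i = ((i : ℕ) : ℝ) • w a := rfl

theorem stdMap_homotopic {m : ℕ} (n : ℕ) {A : Type*} [TopologicalSpace A] (w w' : A → Eu m)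
    (hw : ∀ a, w a ≠ 0) (hc : Continuous w) (hw' : ∀ a, w' a ≠ 0) (hc' : Continuous w')
    (h : ∀ a, ∀ s : I, (1 - (s : ℝ)) • w a + (s : ℝ) • w' a ≠ 0) :
    (stdMap n w hw hc).Homotopic (stdMap n w' hw' hc') := by
  apply homotopic_linear
  intro a s i j hij heq
  have e1 : ∀ i : Fin n, (1 - (s : ℝ)) • (((i : ℕ) : ℝ) • w a) + (s : ℝ) • (((i : ℕ) : ℝ) • w' a)
      = ((i : ℕ) : ℝ) • ((1 - (s : ℝ)) • w a + (s : ℝ) • w' a) := by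
    intro i
    module
  simp only [stdMap_apply, e1] at heq
  have := smul_left_injective ℝ (h a s) heq
  exact hij (Fin.ext (by exact_mod_cast this))

/-- projection of a configuration to the line spanned by `e` -/
noncomputable def proj {m n : ℕ} (e : Conf m n → Eu m) (x : Conf m n) (i : Fin n) : ℝ :=
  inner ℝ (x.toFun i) (e x)

theorem continuous_proj {m n : ℕ} {e : Conf m n → Eu m} (he : Continuous e) (i : Fin n) :
    Continuous (fun x => proj e x i) := by
  have := Conf.continuous_toFun (m := m) (n := n)
  unfold proj
  fun_prop

open Classical in
noncomputable def gap {m n : ℕ} (e : Conf m n → Eu m) (x : Conf m n) : ℝ :=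
  ∏ i : Fin n, ∏ j : Fin n,
    if proj e x i = proj e x j then 1 else min 1 |proj e x i - proj e x j|

theorem gap_factor_pos {m n : ℕ} (e : Conf m n → Eu m) (x : Conf m n) (i j : Fin n)
    [Decidable (proj e x i = proj e x j)] :
    0 < (if proj e x i = proj e x j then (1 : ℝ) else min 1 |proj e x i - proj e x j|) := by
  split_ifs with h
  · exact one_pos
  · exact lt_min one_pos (abs_pos.2 (sub_ne_zero.2 h))

theorem gap_factor_le {m n : ℕ} (e : Conf m n → Eu m) (x : Conf m n) (i j : Fin n)
    [Decidable (proj e x i = proj e x j)] :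
    (if proj e x i = proj e x j then (1 : ℝ) else min 1 |proj e x i - proj e x j|) ≤ 1 := by
  split_ifs with h
  · exact le_rfl
  · exact min_le_left _ _

theorem gap_pos {m n : ℕ} (e : Conf m n → Eu m) (x : Conf m n) : 0 < gap e x := by
  classical
  exact Finset.prod_pos fun i _ => Finset.prod_pos fun j _ => gap_factor_pos e x i j

theorem prod_le_factor {n : ℕ} (f : Fin n → ℝ) (h0 : ∀ i, 0 < f i) (h1 : ∀ i, f i ≤ 1)
    (i : Fin n) : ∏ j, f j ≤ f i := by
  classical
  rw [← Finset.mul_prod_erase Finset.univ f (Finset.mem_univ i)]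
  have : ∏ j ∈ Finset.univ.erase i, f j ≤ 1 :=
    Finset.prod_le_one (fun j _ => (h0 j).le) (fun j _ => h1 j)
  nlinarith [h0 i]

theorem gap_le {m n : ℕ} (e : Conf m n → Eu m) (x : Conf m n) (i j : Fin n)
    (h : proj e x i ≠ proj e x j) : gap e x ≤ |proj e x i - proj e x j| := by
  classical
  have h1 : gap e x ≤ ∏ j : Fin n,
      if proj e x i = proj e x j then (1 : ℝ) else min 1 |proj e x i - proj e x j| := by
    unfold gap
    exact prod_le_factor (fun i => ∏ j : Fin n,
      if proj e x i = proj e x j then (1 : ℝ) else min 1 |proj e x i - proj e x j|)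
      (fun i => Finset.prod_pos fun j _ => gap_factor_pos e x i j)
      (fun i => Finset.prod_le_one (fun j _ => (gap_factor_pos e x i j).le)
        (fun j _ => gap_factor_le e x i j)) i
  have h2 := prod_le_factor (fun j => if proj e x i = proj e x j then (1 : ℝ)
      else min 1 |proj e x i - proj e x j|) (fun j => gap_factor_pos e x i j)
      (fun j => gap_factor_le e x i j) j
  simp only [h, if_false] at h2
  exact h1.trans (h2.trans (min_le_right _ _))

/-- the pattern of coincidences of the projection is locally constant along `p` -/
def LocPattern {m n : ℕ} (e : Conf m n → Eu m) {A : Type*} [TopologicalSpace A]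
    (p : A → Conf m n) : Prop :=
  ∀ a₀ : A, ∀ᶠ a in 𝓝 a₀, ∀ i j : Fin n,
    proj e (p a) i = proj e (p a) j ↔ proj e (p a₀) i = proj e (p a₀) j

theorem continuous_gap {m n : ℕ} {e : Conf m n → Eu m} (he : Continuous e) {A : Type*}
    [TopologicalSpace A] (p : C(A, Conf m n)) (hp : LocPattern e p) :
    Continuous (fun a => gap e (p a)) := by
  classical
  rw [continuous_iff_continuousAt]
  intro a₀
  unfold gap
  refine tendsto_finsetProd _ fun i _ => tendsto_finsetProd _ fun j _ => ?_
  have hc : ∀ i, Continuous fun a => proj e (p a) i := fun i =>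
    (continuous_proj he i).comp p.continuous
  have hcij : Continuous fun a => min 1 |proj e (p a) i - proj e (p a) j| := by
    have := hc i
    have := hc j
    fun_prop
  by_cases h : proj e (p a₀) i = proj e (p a₀) j
  · have : (fun _ : A => (1 : ℝ)) =ᶠ[𝓝 a₀] fun a =>
        if proj e (p a) i = proj e (p a) j then 1 else min 1 |proj e (p a) i - proj e (p a) j| := by
      filter_upwards [hp a₀] with a ha
      rw [if_pos ((ha i j).2 h)]
    rw [if_pos h]
    exact tendsto_const_nhds.congr' this
  · have : (fun a : A => min 1 |proj e (p a) i - proj e (p a) j|) =ᶠ[𝓝 a₀] fun a =>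
        if proj e (p a) i = proj e (p a) j then 1 else min 1 |proj e (p a) i - proj e (p a) j| := by
      filter_upwards [hp a₀] with a ha
      rw [if_neg (fun h' => h ((ha i j).1 h'))]
    rw [if_neg h]
    exact Filter.Tendsto.congr' this hcij.continuousAt

theorem deform {m n : ℕ} (hn : 0 < n) {e v : Conf m n → Eu m} (he : Continuous e)
    (hv : Continuous v) (he0 : ∀ x, e x ≠ 0) (hv0 : ∀ x, v x ≠ 0)
    (hev : ∀ x, inner ℝ (e x) (v x) = 0) {A : Type*}
    [TopologicalSpace A] (p : C(A, Conf m n)) (hp : LocPattern e p) :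
    p.Homotopic (stdMap n (fun a => v (p a)) (fun a => hv0 _) (hv.comp p.continuous)) := by
  have hcf := Conf.continuous_toFun (m := m) (n := n)
  have hve : ∀ x, inner ℝ (v x) (e x) = 0 := fun x => by rw [real_inner_comm]; exact hev x
  let ep : Conf m n → ℝ := fun x => gap e x / (n * (1 + inner ℝ (e x) (e x)))
  have hee : ∀ x, 0 < inner ℝ (e x) (e x) := fun x => real_inner_self_pos.2 (he0 x)
  have hvv : ∀ x, 0 < inner ℝ (v x) (v x) := fun x => real_inner_self_pos.2 (hv0 x)
  have hnR : (0 : ℝ) < n := by exact_mod_cast hn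
  have hep : ∀ x, 0 < ep x := fun x => div_pos (gap_pos e x) (by
    have := hee x
    positivity)
  have hepc : Continuous fun a => ep (p a) := by
    have h1 := continuous_gap he p hp
    refine h1.div (by fun_prop) ?_
    intro a
    have := hee (p a)
    positivity
  have hsep : ∀ x (s : ℝ) (i j : Fin n), 0 ≤ s → s ≤ 1 →
      proj e x i + s * ep x * (i : ℕ) * inner ℝ (e x) (e x) =
      proj e x j + s * ep x * (j : ℕ) * inner ℝ (e x) (e x) → i ≠ j →
      s = 0 ∧ proj e x i = proj e x j := by
    intro x s i j hs0 hs1 heq hij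
    have hij' : ((i : ℕ) : ℝ) - (j : ℕ) ≠ 0 := by
      rw [sub_ne_zero]
      intro h
      exact hij (Fin.ext (by exact_mod_cast h))
    have hE := hee x
    have h1 : proj e x i - proj e x j =
        - (s * ep x * (((i : ℕ) : ℝ) - (j : ℕ)) * inner ℝ (e x) (e x)) := by linarith
    by_cases hpe : proj e x i = proj e x j
    · refine ⟨?_, hpe⟩
      rw [hpe, sub_self] at h1
      have h2 : s * ep x * (((i : ℕ) : ℝ) - (j : ℕ)) * inner ℝ (e x) (e x) = 0 := by linarith
      have := (hep x).ne'
      simp only [mul_eq_zero, this, hij', hE.ne', or_false] at h2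
      exact h2
    · exfalso
      have h3 := gap_le e x i j hpe
      have h4 : gap e x = ep x * (n * (1 + inner ℝ (e x) (e x))) := by
        simp only [ep]
        field_simp
      have hiR : ((i : ℕ) : ℝ) < n := by exact_mod_cast i.2
      have hjR : ((j : ℕ) : ℝ) < n := by exact_mod_cast j.2
      have hi0 : (0 : ℝ) ≤ ((i : ℕ) : ℝ) := by positivity
      have hj0 : (0 : ℝ) ≤ ((j : ℕ) : ℝ) := by positivity
      have h5 : |((i : ℕ) : ℝ) - (j : ℕ)| ≤ n := by
        rw [abs_le]
        constructor <;> linarith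
      rw [h1, abs_neg, abs_mul, abs_mul, abs_mul, abs_of_nonneg hs0, abs_of_pos (hep x),
        abs_of_pos hE, h4] at h3
      have h6 : s * ep x * |((i : ℕ) : ℝ) - (j : ℕ)| * inner ℝ (e x) (e x) ≤
          1 * ep x * n * inner ℝ (e x) (e x) := by
        have := hep x
        gcongr
      nlinarith [mul_pos (hep x) hnR]
  -- first stage
  let f1 : Conf m n → Fin n → Eu m := fun x i => x.toFun i + (ep x * (i : ℕ)) • e x
  have in1 : ∀ x i, inner ℝ (f1 x i) (e x) =
      proj e x i + 1 * ep x * (i : ℕ) * inner ℝ (e x) (e x) := by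
    intro x i
    simp only [f1, inner_add_left, real_inner_smul_left, proj]
    ring
  have inj1 : ∀ x, Function.Injective (f1 x) := by
    intro x i j hij
    by_contra hne
    have := congrArg (fun y => inner ℝ y (e x)) hij
    simp only [in1] at this
    have := hsep x 1 i j zero_le_one le_rfl this hne
    exact one_ne_zero this.1
  have cp : ∀ i, Continuous fun a => (p a).toFun i := fun i =>
    (continuous_apply i).comp (hcf.comp p.continuous)
  have c1 : ∀ i, Continuous fun a => f1 (p a) i := by
    intro i
    exact (cp i).add ((hepc.mul continuous_const).smul (he.comp p.continuous))
  let F1 : C(A, Conf m n) := ⟨fun a => Conf.mk (f1 (p a)) (inj1 _),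
    Conf.continuous_mk (continuous_pi c1) _⟩
  let f2 : Conf m n → Fin n → Eu m := fun x i => ((i : ℕ) : ℝ) • v x + (inner ℝ (f1 x i) (e x)) • e x
  have in2v : ∀ x i, inner ℝ (f2 x i) (v x) = (i : ℕ) * inner ℝ (v x) (v x) := by
    intro x i
    simp only [f2, inner_add_left, real_inner_smul_left, hev]
    ring
  have in2e : ∀ x i, inner ℝ (f2 x i) (e x) = inner ℝ (f1 x i) (e x) * inner ℝ (e x) (e x) := by
    intro x i
    simp only [f2, inner_add_left, real_inner_smul_left, hve]
    ring
  have inj2 : ∀ x, Function.Injective (f2 x) := by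
    intro x i j hij
    have := congrArg (fun y => inner ℝ y (v x)) hij
    simp only [in2v] at this
    have := mul_right_cancel₀ (hvv x).ne' this
    exact Fin.ext (by exact_mod_cast this)
  have c2 : ∀ i, Continuous fun a => f2 (p a) i := by
    intro i
    have h1 : Continuous fun a => inner ℝ (f1 (p a) i) (e (p a)) :=
      (c1 i).inner (he.comp p.continuous)
    have h2 : Continuous fun a => v (p a) := hv.comp p.continuous
    have h3 : Continuous fun a => e (p a) := he.comp p.continuous
    exact (h2.const_smul ((i : ℕ) : ℝ)).add (h1.smul h3)
  let F2 : C(A, Conf m n) := ⟨fun a => Conf.mk (f2 (p a)) (inj2 _),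
    Conf.continuous_mk (continuous_pi c2) _⟩
  have H01 : p.Homotopic F1 := by
    apply homotopic_linear
    intro a s i j hij heq
    have e1 : ∀ i, (1 - (s : ℝ)) • (p a).toFun i + (s : ℝ) • (F1 a).toFun i =
        (p a).toFun i + ((s : ℝ) * ep (p a) * (i : ℕ)) • e (p a) := by
      intro i
      simp only [F1, f1, ContinuousMap.coe_mk, Conf.toFun_mk]
      module
    rw [e1, e1] at heq
    have h1 := congrArg (fun y => inner ℝ y (e (p a))) heq
    simp only [inner_add_left, real_inner_smul_left] at h1
    obtain ⟨hs, -⟩ := hsep (p a) s i j s.2.1 s.2.2 h1 hij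
    simp only [hs, zero_mul, zero_smul, add_zero] at heq
    exact hij ((p a).inj heq)
  have H12 : F1.Homotopic F2 := by
    apply homotopic_linear
    intro a s i j hij heq
    have h1 := congrArg (fun y => inner ℝ y (e (p a))) heq
    simp only [inner_add_left, real_inner_smul_left, F1, F2, ContinuousMap.coe_mk, Conf.toFun_mk,
      in2e] at h1
    have hE := hee (p a)
    have hs0 := s.2.1
    have hs1 := s.2.2
    have hpos : 0 < (1 - (s : ℝ)) + s * inner ℝ (e (p a)) (e (p a)) := by
      rcases eq_or_lt_of_le hs0 with h | h
      · rw [← h]; norm_num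
      · have := mul_pos h hE
        linarith
    have h2 : ((1 - (s : ℝ)) + s * inner ℝ (e (p a)) (e (p a))) * inner ℝ (f1 (p a) i) (e (p a)) =
      ((1 - (s : ℝ)) + s * inner ℝ (e (p a)) (e (p a))) * inner ℝ (f1 (p a) j) (e (p a)) := by
      linarith
    have h3 := mul_left_cancel₀ hpos.ne' h2
    rw [in1, in1] at h3
    exact one_ne_zero (hsep _ 1 i j zero_le_one le_rfl h3 hij).1
  have H23 : F2.Homotopic (stdMap n (fun a => v (p a)) (fun a => hv0 _)
      (hv.comp p.continuous)) := by
    apply homotopic_linear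
    intro a s i j hij heq
    have h1 := congrArg (fun y => inner ℝ y (v (p a))) heq
    simp only [inner_add_left, real_inner_smul_left, F2, stdMap_apply, ContinuousMap.coe_mk,
      Conf.toFun_mk, in2v] at h1
    have h2 : ((i : ℕ) : ℝ) * inner ℝ (v (p a)) (v (p a)) =
        ((j : ℕ) : ℝ) * inner ℝ (v (p a)) (v (p a)) := by linarith
    have h3 := mul_right_cancel₀ (hvv (p a)).ne' h2
    exact hij (Fin.ext (by exact_mod_cast h3))
  exact (H01.trans H12).trans H23

end Upper2

section Upper3

open Topology

theorem card_image_aux {n : ℕ} (f g : Fin n → ℝ) (h : ∀ i j, g i = g j → f i = f j) :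
    (Finset.univ.image f).card ≤ (Finset.univ.image g).card ∧
    ((Finset.univ.image f).card = (Finset.univ.image g).card → ∀ i j, f i = f j → g i = g j) := by
  classical
  have hfac : ∃ φ : ℝ → ℝ, ∀ i, f i = φ (g i) := by
    refine ⟨fun y => if hy : ∃ i, g i = y then f hy.choose else 0, fun i => ?_⟩
    have hy : ∃ j, g j = g i := ⟨i, rfl⟩
    simp only [hy, dif_pos]
    exact (h _ _ hy.choose_spec).symm
  obtain ⟨φ, hφ⟩ := hfac
  have him : Finset.univ.image f = (Finset.univ.image g).image φ := by
    rw [Finset.image_image]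
    congr 1
    funext i
    exact hφ i
  rw [him]
  refine ⟨Finset.card_image_le, fun hc i j hij => ?_⟩
  have hinj := Finset.card_image_iff.1 hc
  apply hinj
  · simp
  · simp
  · rw [← hφ, ← hφ, hij]

/-- number of distinct projections -/
noncomputable def cpr {m n : ℕ} (e : Conf m n → Eu m) (x : Conf m n) : ℕ :=
  (Finset.univ.image (proj e x)).card

theorem cpr_le {m n : ℕ} (e : Conf m n → Eu m) (x : Conf m n) : cpr e x ≤ n := by
  unfold cpr
  exact Finset.card_image_le.trans (by simp)

theorem eventually_pattern {m n : ℕ} {e : Conf m n → Eu m} (he : Continuous e) (x : Conf m n) :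
    ∀ᶠ y in 𝓝 x, ∀ i j, proj e y i = proj e y j → proj e x i = proj e x j := by
  rw [Filter.eventually_all]
  intro i
  rw [Filter.eventually_all]
  intro j
  by_cases h : proj e x i = proj e x j
  · exact Filter.Eventually.of_forall fun _ _ => h
  · have := (isOpen_ne_fun (continuous_proj he i) (continuous_proj he j)).mem_nhds h
    filter_upwards [this] with y hy hy'
    exact absurd hy' hy

theorem eventually_cpr {m n : ℕ} {e : Conf m n → Eu m} (he : Continuous e) (x : Conf m n) :
    ∀ᶠ y in 𝓝 x, cpr e x ≤ cpr e y ∧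
      (cpr e x = cpr e y → ∀ i j, proj e y i = proj e y j ↔ proj e x i = proj e x j) := by
  filter_upwards [eventually_pattern he x] with y hy
  have h := card_image_aux (proj e x) (proj e y) hy
  exact ⟨h.1, fun hc i j => ⟨hy i j, h.2 hc i j⟩⟩

theorem upper_general (m n : ℕ) (hm : 2 ≤ m) (hn : 2 ≤ n) :
    HasMotionCover (Conf m n) (2 * n - 1) := by
  let e0 : Eu m := EuclideanSpace.single ⟨0, by omega⟩ 1
  let v0 : Eu m := EuclideanSpace.single ⟨1, by omega⟩ 1
  let e : Conf m n → Eu m := fun _ => e0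
  let v : Conf m n → Eu m := fun _ => v0
  have he : Continuous e := continuous_const
  have hv : Continuous v := continuous_const
  have he0 : ∀ x, e x ≠ 0 := fun x => by simp [e, e0]
  have hv0 : ∀ x, v x ≠ 0 := fun x => by simp [v, v0]
  have hev : ∀ x, inner ℝ (e x) (v x) = 0 := fun x => by
    simp [e, e0, v, v0, EuclideanSpace.inner_single_left]
  have hpos : ∀ x, 1 ≤ cpr e x := by
    intro x
    refine Finset.card_pos.2 ⟨proj e x ⟨0, by omega⟩, ?_⟩
    simp
  refine motionCover_of_levels (fun p => cpr e p.1 + cpr e p.2) 2 (2 * n - 1) ?_ ?_ ?_ ?_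
  · intro p
    have := hpos p.1
    have := hpos p.2
    omega
  · intro p
    have := cpr_le e p.1
    have := cpr_le e p.2
    omega
  · intro p
    have h1 := (continuous_fst.tendsto p).eventually (eventually_cpr he p.1)
    have h2 := (continuous_snd.tendsto p).eventually (eventually_cpr he p.2)
    filter_upwards [h1, h2] with q hq1 hq2
    exact add_le_add hq1.1 hq2.1
  · intro c
    set A : Set (Conf m n × Conf m n) := {p | cpr e p.1 + cpr e p.2 = c} with hA
    have hloc : ∀ a₀ : A, ∀ᶠ a : A in 𝓝 a₀,
        (∀ i j, proj e a.1.1 i = proj e a.1.1 j ↔ proj e a₀.1.1 i = proj e a₀.1.1 j) ∧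
        (∀ i j, proj e a.1.2 i = proj e a.1.2 j ↔ proj e a₀.1.2 i = proj e a₀.1.2 j) := by
      intro a₀
      have c1 : Continuous fun a : A => a.1.1 := by fun_prop
      have c2 : Continuous fun a : A => a.1.2 := by fun_prop
      have h1 := (c1.tendsto a₀).eventually (eventually_cpr he a₀.1.1)
      have h2 := (c2.tendsto a₀).eventually (eventually_cpr he a₀.1.2)
      filter_upwards [h1, h2] with a ha1 ha2
      have e1 : cpr e a.1.1 + cpr e a.1.2 = c := a.2
      have e2 : cpr e a₀.1.1 + cpr e a₀.1.2 = c := a₀.2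
      exact ⟨ha1.2 (by omega), ha2.2 (by omega)⟩
    have H1 := deform (by omega) he hv he0 hv0 hev (resFst A)
      (fun a₀ => (hloc a₀).mono fun a ha => ha.1)
    have H2 := deform (by omega) he hv he0 hv0 hev (resSnd A)
      (fun a₀ => (hloc a₀).mono fun a ha => ha.2)
    exact H1.trans H2.symm

/-- partner coordinate -/
def partner {m : ℕ} (hm : Even m) (i : Fin m) : Fin m :=
  if h : (i : ℕ) % 2 = 0 then ⟨i + 1, by
    obtain ⟨k, hk⟩ := hm
    have := i.2
    omega⟩ else ⟨i - 1, by have := i.2; omega⟩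

theorem partner_partner {m : ℕ} (hm : Even m) (i : Fin m) : partner hm (partner hm i) = i := by
  apply Fin.ext
  unfold partner
  by_cases h : (i : ℕ) % 2 = 0
  · have h' : ((i : ℕ) + 1) % 2 ≠ 0 := by omega
    simp [h, h']
  · have h' : ((i : ℕ) - 1) % 2 = 0 := by omega
    simp only [h, h', dif_pos, dif_neg, not_false_eq_true]
    omega

def psgn {m : ℕ} (i : Fin m) : ℝ := if (i : ℕ) % 2 = 0 then -1 else 1

theorem psgn_partner {m : ℕ} (hm : Even m) (i : Fin m) : psgn (partner hm i) = - psgn i := by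
  unfold partner psgn
  by_cases h : (i : ℕ) % 2 = 0
  · have h' : ((i : ℕ) + 1) % 2 ≠ 0 := by omega
    simp [h, h']
  · have h' : ((i : ℕ) - 1) % 2 = 0 := by omega
    simp [h, h']

/-- a tangent field on odd spheres -/
noncomputable def Jm {m : ℕ} (hm : Even m) (x : Eu m) : Eu m :=
  WithLp.toLp 2 (fun i => psgn i * x (partner hm i))

theorem continuous_Jm {m : ℕ} (hm : Even m) : Continuous (Jm hm) := by
  unfold Jm
  fun_prop

theorem inner_Jm {m : ℕ} (hm : Even m) (x : Eu m) : inner ℝ x (Jm hm x) = 0 := by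
  have h1 : inner ℝ x (Jm hm x) = ∑ i, psgn i * x (partner hm i) * x i := by
    simp [PiLp.inner_apply, Jm]
  have h2 : ∑ i, psgn i * x (partner hm i) * x i =
      ∑ i, psgn (partner hm i) * x (partner hm (partner hm i)) * x (partner hm i) := by
    let E : Fin m ≃ Fin m := ⟨partner hm, partner hm, partner_partner hm, partner_partner hm⟩
    exact (Equiv.sum_comp E (fun i => psgn i * x (partner hm i) * x i)).symm
  have h3 : ∑ i, psgn (partner hm i) * x (partner hm (partner hm i)) * x (partner hm i) =
      - ∑ i, psgn i * x (partner hm i) * x i := by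
    rw [← Finset.sum_neg_distrib]
    refine Finset.sum_congr rfl fun i _ => ?_
    rw [psgn_partner, partner_partner]
    ring
  rw [h1]
  linarith

theorem Jm_ne_zero {m : ℕ} (hm : Even m) {x : Eu m} (hx : x ≠ 0) : Jm hm x ≠ 0 := by
  intro h
  apply hx
  ext i
  have h1 := congrArg (fun y : Eu m => y (partner hm i)) h
  simp only [Jm, partner_partner, PiLp.zero_apply, mul_eq_zero] at h1
  rcases h1 with h1 | h1
  · unfold psgn at h1
    split_ifs at h1 <;> norm_num at h1
  · simpa using h1

theorem upper_even (m n : ℕ) (hm : 2 ≤ m) (hn : 2 ≤ n) (hme : Even m) :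
    HasMotionCover (Conf m n) (2 * n - 2) := by
  classical
  have hcf := Conf.continuous_toFun (m := m) (n := n)
  let i0 : Fin n := ⟨0, by omega⟩
  let i1 : Fin n := ⟨1, by omega⟩
  let e : Conf m n → Eu m := fun x => x.toFun i1 - x.toFun i0
  let v : Conf m n → Eu m := fun x => Jm hme (e x)
  have he : Continuous e := by fun_prop
  have hv : Continuous v := (continuous_Jm hme).comp he
  have he0 : ∀ x, e x ≠ 0 := fun x => by
    rw [sub_ne_zero]
    intro h
    have := x.inj h
    simp [i0, i1] at this
  have hv0 : ∀ x, v x ≠ 0 := fun x => Jm_ne_zero hme (he0 x)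
  have hev : ∀ x, inner ℝ (e x) (v x) = 0 := fun x => inner_Jm hme _
  have hpos : ∀ x, 2 ≤ cpr e x := by
    intro x
    have hne : proj e x i0 ≠ proj e x i1 := by
      intro h
      have h1 : inner ℝ (e x) (e x) = proj e x i1 - proj e x i0 := by
        simp only [proj, e, inner_sub_left]
      rw [h, sub_self] at h1
      exact he0 x (inner_self_eq_zero.1 h1)
    rw [← Finset.card_pair hne]
    apply Finset.card_le_card
    intro y hy
    simp only [Finset.mem_insert, Finset.mem_singleton] at hy
    rcases hy with rfl | rfl <;> simp
  let anti : Conf m n × Conf m n → Prop := fun p => ‖v p.1‖ • v p.2 + ‖v p.2‖ • v p.1 = 0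
  have hanti : IsOpen {p | ¬ anti p} := by
    have : Continuous fun p : Conf m n × Conf m n => ‖v p.1‖ • v p.2 + ‖v p.2‖ • v p.1 := by
      fun_prop
    exact isOpen_ne_fun this continuous_const
  let na : Conf m n × Conf m n → ℕ := fun p => if anti p then 0 else 1
  have hna1 : ∀ p, na p ≤ 1 := fun p => by
    simp only [na]
    split_ifs <;> omega
  have hna : ∀ p, ∀ᶠ q in 𝓝 p, na p ≤ na q := by
    intro p
    by_cases hp : anti p
    · exact Filter.Eventually.of_forall fun q => by simp [na, hp]
    · filter_upwards [hanti.mem_nhds hp] with q hq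
      have hq' : ¬ anti q := hq
      simp [na, hp, hq']
  refine motionCover_of_levels (fun p => cpr e p.1 + cpr e p.2 + na p) 4 (2 * n - 2) ?_ ?_ ?_ ?_
  · intro p
    have := hpos p.1
    have := hpos p.2
    omega
  · intro p
    have := cpr_le e p.1
    have := cpr_le e p.2
    have := hna1 p
    omega
  · intro p
    have h1 := (continuous_fst.tendsto p).eventually (eventually_cpr he p.1)
    have h2 := (continuous_snd.tendsto p).eventually (eventually_cpr he p.2)
    filter_upwards [h1, h2, hna p] with q hq1 hq2 hq3
    exact add_le_add (add_le_add hq1.1 hq2.1) hq3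
  · intro c
    set A : Set (Conf m n × Conf m n) := {p | cpr e p.1 + cpr e p.2 + na p = c} with hA
    have c1 : Continuous fun a : A => a.1.1 := by fun_prop
    have c2 : Continuous fun a : A => a.1.2 := by fun_prop
    have c3 : Continuous fun a : A => a.1 := by fun_prop
    have hloc : ∀ a₀ : A, ∀ᶠ a : A in 𝓝 a₀,
        (∀ i j, proj e a.1.1 i = proj e a.1.1 j ↔ proj e a₀.1.1 i = proj e a₀.1.1 j) ∧
        (∀ i j, proj e a.1.2 i = proj e a.1.2 j ↔ proj e a₀.1.2 i = proj e a₀.1.2 j) ∧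
        (anti a.1 ↔ anti a₀.1) := by
      intro a₀
      have h1 := (c1.tendsto a₀).eventually (eventually_cpr he a₀.1.1)
      have h2 := (c2.tendsto a₀).eventually (eventually_cpr he a₀.1.2)
      have h3 := (c3.tendsto a₀).eventually (hna a₀.1)
      filter_upwards [h1, h2, h3] with a ha1 ha2 ha3
      have e1 : cpr e a.1.1 + cpr e a.1.2 + na a.1 = c := a.2
      have e2 : cpr e a₀.1.1 + cpr e a₀.1.2 + na a₀.1 = c := a₀.2
      refine ⟨ha1.2 (by omega), ha2.2 (by omega), ?_⟩
      have e3 : na a.1 = na a₀.1 := by omega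
      simp only [na] at e3
      by_cases g1 : anti a.1 <;> by_cases g2 : anti a₀.1 <;> simp [g1, g2] at e3 ⊢
    have H1 := deform (by omega) he hv he0 hv0 hev (resFst A)
      (fun a₀ => (hloc a₀).mono fun a ha => ha.1)
    have H2 := deform (by omega) he hv he0 hv0 hev (resSnd A)
      (fun a₀ => (hloc a₀).mono fun a ha => ha.2.1)
    let w : A → Eu m := fun a => if anti a.1 then Jm hme (v a.1.1) else v a.1.1
    have hw0 : ∀ a, w a ≠ 0 := fun a => by
      simp only [w]
      split_ifs
      · exact Jm_ne_zero hme (hv0 _)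
      · exact hv0 _
    have hwc : Continuous w := by
      rw [continuous_iff_continuousAt]
      intro a₀
      by_cases h : anti a₀.1
      · have : (fun a : A => Jm hme (v a.1.1)) =ᶠ[𝓝 a₀] w := by
          filter_upwards [hloc a₀] with a ha
          simp only [w]
          rw [if_pos (ha.2.2.2 h)]
        exact ((continuous_Jm hme).comp (hv.comp c1)).continuousAt.congr this
      · have : (fun a : A => v a.1.1) =ᶠ[𝓝 a₀] w := by
          filter_upwards [hloc a₀] with a ha
          simp only [w]
          rw [if_neg (fun h' => h (ha.2.2.1 h'))]
        exact (hv.comp c1).continuousAt.congr this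
    have H3 : (stdMap n (fun a => v (resFst A a)) (fun a => hv0 _)
        (hv.comp (resFst A).continuous)).Homotopic (stdMap n w hw0 hwc) := by
      apply stdMap_homotopic
      intro a s
      show (1 - (s : ℝ)) • v a.1.1 + (s : ℝ) • w a ≠ 0
      simp only [w]
      split_ifs with h
      · intro h0
        have h1 := congrArg (fun y => inner ℝ (v a.1.1) y) h0
        simp only [inner_add_right, real_inner_smul_right, inner_Jm, inner_zero_right, mul_zero,
          add_zero, mul_eq_zero] at h1
        rcases h1 with h1 | h1
        · rw [h1, zero_smul, zero_add] at h0
          have h2 : (s : ℝ) = 1 := by linarith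
          rw [h2, one_smul] at h0
          exact Jm_ne_zero hme (hv0 _) h0
        · exact hv0 _ (inner_self_eq_zero.1 h1)
      · rw [← add_smul]
        simpa using hv0 _
    have H4 : (stdMap n w hw0 hwc).Homotopic (stdMap n (fun a => v (resSnd A a)) (fun a => hv0 _)
        (hv.comp (resSnd A).continuous)) := by
      apply stdMap_homotopic
      intro a s
      show (1 - (s : ℝ)) • w a + (s : ℝ) • v a.1.2 ≠ 0
      have n1 : 0 < ‖v a.1.1‖ := norm_pos_iff.2 (hv0 _)
      have n2 : 0 < ‖v a.1.2‖ := norm_pos_iff.2 (hv0 _)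
      simp only [w]
      split_ifs with h
      · intro h0
        have h' : ‖v a.1.1‖ • v a.1.2 + ‖v a.1.2‖ • v a.1.1 = 0 := h
        have k1 := congrArg (fun y => inner ℝ (Jm hme (v a.1.1)) y) h'
        have k0 : inner ℝ (Jm hme (v a.1.1)) (v a.1.1) = 0 := by
          rw [real_inner_comm]
          exact inner_Jm hme _
        simp only [inner_add_right, real_inner_smul_right, k0, inner_zero_right, mul_zero,
          add_zero, mul_eq_zero, n1.ne', false_or] at k1
        have h1 := congrArg (fun y => inner ℝ (Jm hme (v a.1.1)) y) h0
        simp only [inner_add_right, real_inner_smul_right, k1, inner_zero_right, mul_zero,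
          add_zero, mul_eq_zero] at h1
        rcases h1 with h1 | h1
        · rw [h1, zero_smul, zero_add] at h0
          have h2 : (s : ℝ) = 1 := by linarith
          rw [h2, one_smul] at h0
          exact hv0 _ h0
        · exact Jm_ne_zero hme (hv0 _) (inner_self_eq_zero.1 h1)
      · intro h0
        apply h
        show ‖v a.1.1‖ • v a.1.2 + ‖v a.1.2‖ • v a.1.1 = 0
        have hs0 := s.2.1
        have hs1 := s.2.2
        have h1 : (1 - (s : ℝ)) • v a.1.1 = - ((s : ℝ) • v a.1.2) := eq_neg_of_add_eq_zero_left h0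
        have h2 := congrArg norm h1
        rw [norm_neg, norm_smul, norm_smul, Real.norm_of_nonneg hs0,
          Real.norm_of_nonneg (by linarith)] at h2
        have hs : (s : ℝ) ≠ 0 := by
          intro hs
          rw [hs] at h2
          norm_num at h2
          exact hv0 _ h2
        have h3 : (s : ℝ) • (‖v a.1.1‖ • v a.1.2 + ‖v a.1.2‖ • v a.1.1) = 0 := by
          calc (s : ℝ) • (‖v a.1.1‖ • v a.1.2 + ‖v a.1.2‖ • v a.1.1)
              = ‖v a.1.1‖ • ((s : ℝ) • v a.1.2) + ((s : ℝ) * ‖v a.1.2‖) • v a.1.1 := by module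
            _ = ‖v a.1.1‖ • ((1 - (s : ℝ)) • v a.1.1 + (s : ℝ) • v a.1.2) := by
              rw [← h2]; module
            _ = 0 := by rw [h0, smul_zero]
        exact (smul_eq_zero.1 h3).resolve_left hs
    exact ((H1.trans H3).trans H4).trans H2.symm

end Upper3

/-! ### Lower bound: cochains on sequences -/

section Cochains

/-- the coface map skipping `i` -/
def skip (i n : ℕ) : ℕ := if n < i then n else n + 1

theorem skip_skip {i j : ℕ} (h : i ≤ j) (n : ℕ) : skip i (skip j n) = skip (j + 1) (skip i n) := by
  unfold skip; split_ifs <;> omega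

variable {Y : Type*}

/-- the coboundary of a cochain of degree `p` -/
def cob (p : ℕ) (η : (ℕ → Y) → ℤ) (w : ℕ → Y) : ℤ :=
  ∑ i ∈ Finset.range (p + 2), (-1) ^ i * η (fun n => w (skip i n))

/-- a cochain depends only on the entries up to `p` -/
def Deg (p : ℕ) (η : (ℕ → Y) → ℤ) : Prop :=
  ∀ w w' : ℕ → Y, (∀ n, n ≤ p → w n = w' n) → η w = η w'

theorem Deg.mono {p q : ℕ} {η : (ℕ → Y) → ℤ} (h : Deg p η) (hpq : p ≤ q) : Deg q η :=
  fun w w' hw => h w w' fun n hn => hw n (hn.trans hpq)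

theorem Deg.cob {p : ℕ} {η : (ℕ → Y) → ℤ} (h : Deg p η) : Deg (p + 1) (cob p η) := by
  intro w w' hw
  unfold _root_.cob
  refine Finset.sum_congr rfl fun i _ => ?_
  rw [h _ _ fun n hn => hw _ ?_]
  unfold skip; split_ifs <;> omega

theorem cob_cob (p : ℕ) (η : (ℕ → Y) → ℤ) (w : ℕ → Y) : cob (p + 1) (cob p η) w = 0 := by
  unfold cob
  simp only [Finset.mul_sum]
  rw [← Finset.sum_product']
  refine Finset.sum_involution
    (fun x _ => if x.1 ≤ x.2 then (x.2 + 1, x.1) else (x.2, x.1 - 1)) ?_ ?_ ?_ ?_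
  · rintro ⟨i, j⟩ hx
    have key : ∀ i j : ℕ, i ≤ j → (-1 : ℤ) ^ i * ((-1) ^ j * η (fun n => w (skip i (skip j n)))) +
        (-1) ^ (j + 1) * ((-1) ^ i * η (fun n => w (skip (j + 1) (skip i n)))) = 0 := by
      intro i j hij
      simp only [skip_skip hij]
      ring
    simp only
    split_ifs with h
    · exact key i j h
    · have h2 : j ≤ i - 1 := by omega
      have h3 : i - 1 + 1 = i := by omega
      have := key j (i - 1) h2
      rw [h3] at this
      rw [add_comm]
      exact this
  · rintro ⟨i, j⟩ hx _
    simp only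
    split_ifs with h
    · intro he
      simp only [Prod.mk.injEq] at he
      omega
    · intro he
      simp only [Prod.mk.injEq] at he
      omega
  · rintro ⟨i, j⟩ hx
    simp only [Finset.mem_product, Finset.mem_range] at hx ⊢
    split_ifs <;> simp only <;> omega
  · rintro ⟨i, j⟩ hx
    simp only
    split_ifs <;> simp only [Prod.mk.injEq] at * <;>
      first | omega | (refine ⟨?_, ?_⟩ <;> first | trivial | omega)

/-- cup product -/
def cup (p : ℕ) (a b : (ℕ → Y) → ℤ) (w : ℕ → Y) : ℤ := a w * b (fun n => w (p + n))

theorem Deg.cup {p q : ℕ} {a b : (ℕ → Y) → ℤ} (ha : Deg p a) (hb : Deg q b) :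
    Deg (p + q) (cup p a b) := by
  intro w w' h
  unfold _root_.cup
  rw [ha w w' fun n hn => h n (by omega), hb _ _ fun n hn => h (p + n) (by omega)]

theorem leibniz {p q : ℕ} {a b : (ℕ → Y) → ℤ} (ha : Deg p a) (w : ℕ → Y) :
    cob (p + q) (cup p a b) w = cob p a w * b (fun n => w (p + 1 + n)) +
      (-1) ^ p * a w * cob q b (fun n => w (p + n)) := by
  have e1 : p + q + 2 = (p + 1) + (q + 1) := by ring
  unfold cob
  rw [e1, Finset.sum_range_add, Finset.sum_range_succ _ (p + 1), Finset.sum_range_succ' _ (q + 1),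
    add_mul, mul_add, Finset.sum_mul, Finset.mul_sum]
  have h1 : ∀ i ∈ Finset.range (p + 1), (-1 : ℤ) ^ i * cup p a b (fun n => w (skip i n)) =
      (-1) ^ i * a (fun n => w (skip i n)) * b (fun n => w (p + 1 + n)) := by
    intro i hi
    have hi' := Finset.mem_range.1 hi
    unfold cup
    have : (fun n => w (skip i (p + n))) = fun n => w (p + 1 + n) := by
      funext n; congr 1; unfold skip; split_ifs <;> omega
    rw [this]; ring
  have haw : ∀ i, p < i → a (fun n => w (skip i n)) = a w := by
    intro i hi
    refine ha _ _ fun n hn => ?_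
    congr 1; unfold skip; split_ifs <;> omega
  have h2 : ∀ i ∈ Finset.range (q + 1),
      (-1 : ℤ) ^ (p + 1 + i) * cup p a b (fun n => w (skip (p + 1 + i) n)) =
      (-1) ^ p * a w * ((-1) ^ (i + 1) * b (fun n => w (p + skip (i + 1) n))) := by
    intro i hi
    unfold cup
    rw [haw _ (by omega)]
    have : (fun n => w (skip (p + 1 + i) (p + n))) = fun n => w (p + skip (i + 1) n) := by
      funext n; congr 1; unfold skip; split_ifs <;> omega
    rw [this]; ring
  rw [Finset.sum_congr rfl h1, Finset.sum_congr rfl h2, haw _ (Nat.lt_succ_self p)]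
  have : (fun n => w (p + skip 0 n)) = fun n => w (p + 1 + n) := by
      funext n; congr 1; unfold skip; split_ifs <;> omega
  rw [this]; ring

/-- product of cochains of degree `d` -/
def Zc (d : ℕ) (z : ℕ → (ℕ → Y) → ℤ) : ℕ → (ℕ → Y) → ℤ
  | 0 => fun _ => 1
  | i + 1 => cup (i * d) (Zc d z i) (z i)

theorem Zc_eq (d : ℕ) (z : ℕ → (ℕ → Y) → ℤ) (k : ℕ) (w : ℕ → Y) :
    Zc d z k w = ∏ i ∈ Finset.range k, z i (fun n => w (i * d + n)) := by
  induction k with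
  | zero => rfl
  | succ k ih => rw [Finset.prod_range_succ, ← ih]; rfl

theorem Zc_deg (d : ℕ) (z : ℕ → (ℕ → Y) → ℤ) (hz : ∀ i, Deg d (z i)) (k : ℕ) :
    Deg (k * d) (Zc d z k) := by
  induction k with
  | zero => intro w w' _; rfl
  | succ k ih =>
    have := ih.cup (hz k)
    rw [Nat.succ_mul]
    exact this

/-- closure properties of a set of small sequences -/
structure SmallSet (S : Set (ℕ → Y)) : Prop where
  comp : ∀ w ∈ S, ∀ f : ℕ → ℕ, (fun n => w (f n)) ∈ S

theorem Zc_closed (d : ℕ) (z : ℕ → (ℕ → Y) → ℤ) (hz : ∀ i, Deg d (z i)) (S : Set (ℕ → Y))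
    (hS : SmallSet S) (hc : ∀ i, ∀ w ∈ S, cob d (z i) w = 0) (k : ℕ) :
    ∀ w ∈ S, cob (k * d) (Zc d z k) w = 0 := by
  induction k with
  | zero => intro w _; simp [cob, Zc, Finset.sum_range_succ]
  | succ k ih =>
    intro w hw
    rw [Nat.succ_mul]
    show cob (k * d + d) (cup (k * d) (Zc d z k) (z k)) w = 0
    rw [leibniz (Zc_deg d z hz k), ih w hw, hc k _ (hS.comp w hw _)]
    simp

theorem Zc_cohomologous (e : ℕ) (z z' η : ℕ → (ℕ → Y) → ℤ) (hz : ∀ i, Deg (e + 1) (z i))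
    (hη : ∀ i, Deg e (η i))
    (S : Set (ℕ → Y)) (hS : SmallSet S) (hc : ∀ i, ∀ w ∈ S, cob (e + 1) (z i) w = 0)
    (hz' : ∀ i w, z' i w = z i w - cob e (η i) w) (k : ℕ) :
    ∃ H : (ℕ → Y) → ℤ, Deg (k * (e + 1) + e) H ∧
      ∀ w ∈ S, Zc (e + 1) z (k + 1) w - Zc (e + 1) z' (k + 1) w = cob (k * (e + 1) + e) H w := by
  have hdz' : ∀ i, Deg (e + 1) (z' i) := by
    intro i w w' h
    rw [hz', hz', hz i w w' h, (hη i).cob w w' h]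
  have hcz' : ∀ i, ∀ w ∈ S, cob (e + 1) (z' i) w = 0 := by
    intro i w hw
    have h1 := hc i w hw
    have h2 := cob_cob e (η i) w
    unfold cob at h1 ⊢
    simp only [hz', mul_sub, Finset.sum_sub_distrib]
    rw [h1]
    unfold cob at h2 ⊢
    rw [h2]; simp
  induction k with
  | zero =>
    refine ⟨η 0, by simpa using hη 0, fun w hw => ?_⟩
    simp only [Zc, cup, hz']
    simp
  | succ k ih =>
    obtain ⟨H, hH, hHe⟩ := ih
    have e1 : (k + 1) * (e + 1) = k * (e + 1) + e + 1 := by ring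
    refine ⟨fun w => cup (k * (e + 1) + e) H (z (k + 1)) w +
      (-1) ^ ((k + 1) * (e + 1)) * cup ((k + 1) * (e + 1)) (Zc (e + 1) z' (k + 1)) (η (k + 1)) w,
      ?_, ?_⟩
    · intro w w' h
      simp only
      rw [(hH.cup (hz (k + 1))) w w' fun n hn => h n (by rw [e1]; omega),
        ((Zc_deg (e + 1) z' hdz' (k + 1)).cup (hη (k + 1))) w w' h]
    · intro w hw
      have L1 := leibniz (q := e + 1) (b := z (k + 1)) hH w
      have L2 := leibniz (q := e) (b := η (k + 1)) (Zc_deg (e + 1) z' hdz' (k + 1)) w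
      rw [Zc_closed (e + 1) z' hdz' S hS hcz' (k + 1) w hw] at L2
      rw [hc (k + 1) _ (hS.comp w hw _), ← hHe w hw] at L1
      have hlin : cob ((k + 1) * (e + 1) + e) (fun w => cup (k * (e + 1) + e) H (z (k + 1)) w +
        (-1) ^ ((k + 1) * (e + 1)) * cup ((k + 1) * (e + 1)) (Zc (e + 1) z' (k + 1)) (η (k + 1)) w) w
        = cob ((k + 1) * (e + 1) + e) (cup (k * (e + 1) + e) H (z (k + 1))) w +
        (-1) ^ ((k + 1) * (e + 1)) * cob ((k + 1) * (e + 1) + e)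
          (cup ((k + 1) * (e + 1)) (Zc (e + 1) z' (k + 1)) (η (k + 1))) w := by
        unfold cob
        rw [Finset.mul_sum, ← Finset.sum_add_distrib]
        refine Finset.sum_congr rfl fun i _ => ?_
        ring
      rw [hlin, L2]
      have e2 : (k + 1) * (e + 1) + e = k * (e + 1) + e + (e + 1) := by ring
      rw [e2, L1, ← e1]
      have hs : (-1 : ℤ) ^ ((k + 1) * (e + 1)) * (-1) ^ ((k + 1) * (e + 1)) = 1 := by
        rw [← mul_pow]; simp
      show Zc (e + 1) z (k + 1) w * z (k + 1) (fun n => w ((k + 1) * (e + 1) + n)) -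
        Zc (e + 1) z' (k + 1) w * z' (k + 1) (fun n => w ((k + 1) * (e + 1) + n)) = _
      rw [hz' (k + 1)]
      generalize cob e (η (k + 1)) (fun n => w ((k + 1) * (e + 1) + n)) = C
      generalize Zc (e + 1) z' (k + 1) w = B
      generalize (-1 : ℤ) ^ ((k + 1) * (e + 1)) = s at *
      linear_combination -(B * C) * hs

end Cochains

section Labels

/-- labels: a coordinate and a sign -/
abbrev Label (d : ℕ) := Fin (d + 1) × Bool

def lrow {d : ℕ} (l : Label d) : Fin (d + 1) → ℤ := if l.2 then Pi.single l.1 1 else 0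

/-- the degree cochain on labels -/
def sig (d : ℕ) (l : ℕ → Label d) : ℤ :=
  Matrix.det (Matrix.of fun i : Fin (d + 1) => lrow (l i))

def Anti {d : ℕ} (l l' : Label d) : Prop := l.1 = l'.1 ∧ l.2 ≠ l'.2

theorem sig_deg (d : ℕ) : Deg d (sig d) := by
  intro w w' h
  unfold sig
  congr 2
  funext i
  rw [h i (Nat.lt_succ_iff.1 i.2)]

theorem sig_zero {d : ℕ} (l : ℕ → Label d) (i j : Fin (d + 1)) (hij : i ≠ j)
    (h : l i = l j) : sig d l = 0 := by
  unfold sig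
  refine Matrix.det_zero_of_row_eq hij ?_
  funext x
  simp [h]

theorem sig_cocycle {d : ℕ} (l : ℕ → Label d)
    (h : ∀ i j, i ≤ d + 1 → j ≤ d + 1 → ¬ Anti (l i) (l j)) : cob d (sig d) l = 0 := by
  let A : Matrix (Fin (d + 2)) (Fin (d + 2)) ℤ :=
    Matrix.of fun i => Fin.cons 1 (lrow (l i))
  have hdet : A.det = 0 := by
    obtain ⟨i, j, hij, he⟩ := Fintype.exists_ne_map_eq_of_card_lt
      (fun i : Fin (d + 2) => (l i).1) (by simp)
    refine Matrix.det_zero_of_row_eq hij ?_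
    have hn := h i j (by omega) (by omega)
    have h2 : l i = l j := by
      refine Prod.ext he ?_
      by_contra h3
      exact hn ⟨he, h3⟩
    show A i = A j
    funext x
    simp only [A, Matrix.of_apply, h2]
  rw [Matrix.det_succ_column_zero] at hdet
  unfold cob
  rw [Finset.sum_range, ← hdet]
  refine Finset.sum_congr rfl fun i _ => ?_
  have h0 : A i 0 = 1 := rfl
  rw [h0, mul_one]
  unfold sig
  congr 2
  funext a b
  have hs : skip (i : ℕ) (a : ℕ) = (i.succAbove a : Fin (d + 2)) := by
    unfold skip
    rw [Fin.succAbove]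
    simp only [Fin.lt_def, Fin.val_castSucc]
    split_ifs <;> simp
  simp only [A, Matrix.of_apply, Matrix.submatrix_apply, Fin.cons_succ, hs]

end Labels

section Prism

variable {Y L : Type*}

def mix (F G : Y → L) (i : ℕ) (w : ℕ → Y) (n : ℕ) : L := if n ≤ i then F (w n) else G (w (n - 1))

def prismCochain (d : ℕ) (sg : (ℕ → L) → ℤ) (F G : Y → L) (w : ℕ → Y) : ℤ :=
  ∑ i ∈ Finset.range d, (-1) ^ i * sg (mix F G i w)

theorem prismCochain_deg (e : ℕ) (sg : (ℕ → L) → ℤ) (hsg : Deg (e + 1) sg) (F G : Y → L) :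
    Deg e (prismCochain (e + 1) sg F G) := by
  intro w w' h
  unfold prismCochain
  refine Finset.sum_congr rfl fun i hi => ?_
  have hi' := Finset.mem_range.1 hi
  rw [hsg _ (mix F G i w') fun n hn => ?_]
  unfold mix
  split_ifs with h1
  · rw [h n (by omega)]
  · rw [h (n - 1) (by omega)]

theorem prism (e : ℕ) (sg : (ℕ → L) → ℤ) (hsg : Deg (e + 1) sg) (F G : Y → L) (w : ℕ → Y)
    (hc : ∀ i, cob (e + 1) sg (mix F G i w) = 0) :
    sg (fun n => G (w n)) - sg (fun n => F (w n)) = cob e (prismCochain (e + 1) sg F G) w := by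
  let T : ℕ → ℕ → L := fun i n => if n < i then F (w n) else G (w n)
  let B : ℕ → ℕ → ℤ := fun i j => (-1) ^ (i + j) * sg (mix F G i (fun n => w (skip j n)))
  let Lo : ℕ → ℤ := fun i => ∑ j ∈ Finset.range i, B (i - 1) j
  let Up : ℕ → ℤ := fun i => ∑ j ∈ Finset.range (e + 1 - i), B i (i + 1 + j)
  have hR : ∀ i ∈ Finset.range (e + 2), sg (T i) - sg (T (i + 1)) - Lo i - Up i = 0 := by
    intro i hi
    have hi' := Finset.mem_range.1 hi
    have h0 := hc i
    unfold cob at h0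
    have e1 : e + 1 + 2 = i + (1 + 1 + (e + 1 - i)) := by omega
    rw [e1, Finset.sum_range_add, Finset.sum_range_add _ (1 + 1), Finset.sum_range_succ _ 1,
      Finset.sum_range_one] at h0
    have a1 : ∀ j ∈ Finset.range i, (-1 : ℤ) ^ j * sg (fun n => mix F G i w (skip j n)) =
        - (-1) ^ i * B (i - 1) j := by
      intro j hj
      have hj' := Finset.mem_range.1 hj
      have : (fun n => mix F G i w (skip j n)) = mix F G (i - 1) (fun n => w (skip j n)) := by
        funext n
        unfold mix skip
        split_ifs <;> first | omega | rfl | (congr 2; omega) | (congr 2; split_ifs <;> omega)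
      rw [this]
      obtain ⟨i', rfl⟩ : ∃ i', i = i' + 1 := ⟨i - 1, by omega⟩
      simp only [B, Nat.add_sub_cancel, pow_add, pow_one]
      have := pow_mul_pow_eq_one i' (by norm_num : (-1 : ℤ) * (-1) = 1)
      linear_combination (-(-1) ^ j * sg (mix F G i' fun n => w (skip j n))) * this
    have a2 : ∀ j ∈ Finset.range (e + 1 - i),
        (-1 : ℤ) ^ (i + (1 + 1 + j)) * sg (fun n => mix F G i w (skip (i + (1 + 1 + j)) n)) =
        - (-1) ^ i * B i (i + 1 + j) := by
      intro j hj
      have : (fun n => mix F G i w (skip (i + (1 + 1 + j)) n)) =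
          mix F G i (fun n => w (skip (i + 1 + j) n)) := by
        funext n
        unfold mix skip
        split_ifs <;> first | omega | rfl | (congr 2; omega) | (congr 2; split_ifs <;> omega)
      rw [this]
      simp only [B, pow_add, pow_one]
      have := pow_mul_pow_eq_one i (by norm_num : (-1 : ℤ) * (-1) = 1)
      linear_combination (-(-1) ^ i * (-1) ^ j * sg (mix F G i fun n => w (skip (i + 1 + j) n))) * this
    have a3 : (fun n => mix F G i w (skip (i + 0) n)) = T i := by
      funext n
      simp only [T]
      unfold mix skip
      split_ifs <;> first | omega | rfl | (congr 2; omega) | (congr 2; split_ifs <;> omega)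
    have a4 : (fun n => mix F G i w (skip (i + (0 + 1)) n)) = T (i + 1) := by
      funext n
      simp only [T]
      unfold mix skip
      split_ifs <;> first | omega | rfl | (congr 2; omega) | (congr 2; split_ifs <;> omega)
    have a4' : (fun n => mix F G i w (skip (i + 1) n)) = T (i + 1) := a4
    rw [Finset.sum_congr rfl a1, Finset.sum_congr rfl a2, a3, ← Finset.mul_sum,
      ← Finset.mul_sum] at h0
    simp only [a4'] at h0
    change - (-1) ^ i * Lo i + ((-1) ^ (i + 0) * sg (T i) + (-1) ^ (i + 1) * sg (T (i + 1)) +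
      - (-1) ^ i * Up i) = 0 at h0
    have := pow_mul_pow_eq_one i (by norm_num : (-1 : ℤ) * (-1) = 1)
    rw [add_zero, pow_succ] at h0
    generalize sg (T i) = x at *
    generalize sg (T (i + 1)) = y at *
    linear_combination (-1) ^ i * h0 - (x - y - Lo i - Up i) * this
  have hsum := Finset.sum_eq_zero hR
  simp only [Finset.sum_sub_distrib] at hsum
  have hT : ∑ i ∈ Finset.range (e + 2), sg (T i) - ∑ i ∈ Finset.range (e + 2), sg (T (i + 1)) =
      sg (T 0) - sg (T (e + 2)) := by
    rw [← Finset.sum_sub_distrib, Finset.sum_range_sub']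
  have hT0 : T 0 = fun n => G (w n) := by funext n; simp [T]
  have hTd : sg (T (e + 2)) = sg (fun n => F (w n)) := by
    refine hsg _ _ fun n hn => ?_
    simp only [T]
    rw [if_pos (by omega)]
  have hL : ∑ i ∈ Finset.range (e + 2), Lo i = ∑ i ∈ Finset.range (e + 1), Lo (i + 1) := by
    rw [Finset.sum_range_succ']
    simp [Lo]
  have hU : ∑ i ∈ Finset.range (e + 2), Up i = ∑ i ∈ Finset.range (e + 1), Up i := by
    rw [Finset.sum_range_succ]
    simp [Up]
  have hLU : ∀ i ∈ Finset.range (e + 1), Lo (i + 1) + Up i = ∑ j ∈ Finset.range (e + 2), B i j := by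
    intro i hi
    have hi' := Finset.mem_range.1 hi
    have e1 : e + 2 = i + 1 + (e + 1 - i) := by omega
    rw [e1, Finset.sum_range_add]
    simp [Lo, Up]
  have hcob : cob e (prismCochain (e + 1) sg F G) w =
      ∑ i ∈ Finset.range (e + 1), ∑ j ∈ Finset.range (e + 2), B i j := by
    unfold cob prismCochain
    simp only [Finset.mul_sum]
    rw [Finset.sum_comm]
    refine Finset.sum_congr rfl fun i _ => Finset.sum_congr rfl fun j _ => ?_
    simp only [B, pow_add]
    ring
  rw [hcob, ← Finset.sum_congr rfl hLU, Finset.sum_add_distrib, ← hL, ← hU, ← hT0, ← hTd]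
  linarith

end Prism

section Lab

theorem exists_abs_eq_norm {d : ℕ} (v : Fin (d + 1) → ℝ) : ∃ j, |v j| = ‖v‖ := by
  obtain ⟨j, -, hj⟩ := Finset.exists_max_image Finset.univ (fun j => |v j|) Finset.univ_nonempty
  refine ⟨j, le_antisymm (norm_le_pi_norm v j) ?_⟩
  exact (pi_norm_le_iff_of_nonneg (abs_nonneg _)).2 fun i => hj i (Finset.mem_univ _)

theorem labSet_nonempty {d : ℕ} (v : Fin (d + 1) → ℝ) :
    (Finset.univ.filter fun j => |v j| = ‖v‖).Nonempty := by
  obtain ⟨j, hj⟩ := exists_abs_eq_norm v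
  exact ⟨j, by simp [hj]⟩

/-- the label of a vector: the last dominant coordinate and its sign -/
noncomputable def lab {d : ℕ} (v : Fin (d + 1) → ℝ) : Label d :=
  ((Finset.univ.filter fun j => |v j| = ‖v‖).max' (labSet_nonempty v),
    decide (0 < v ((Finset.univ.filter fun j => |v j| = ‖v‖).max' (labSet_nonempty v))))

theorem lab_abs {d : ℕ} (v : Fin (d + 1) → ℝ) : |v (lab v).1| = ‖v‖ := by
  have := Finset.max'_mem _ (labSet_nonempty v)
  exact (Finset.mem_filter.1 this).2

theorem lab_max {d : ℕ} (v : Fin (d + 1) → ℝ) (j : Fin (d + 1)) (hj : |v j| = ‖v‖) :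
    j ≤ (lab v).1 :=
  Finset.le_max' _ _ (by simp [hj])

theorem lab_sign {d : ℕ} (v : Fin (d + 1) → ℝ) : (lab v).2 = true ↔ 0 < v (lab v).1 := by
  unfold lab
  simp

theorem lab_true {d : ℕ} {v : Fin (d + 1) → ℝ} (h : (lab v).2 = true) : v (lab v).1 = ‖v‖ := by
  rw [← lab_abs v, abs_of_pos ((lab_sign v).1 h)]

theorem lab_false {d : ℕ} {v : Fin (d + 1) → ℝ} (h : (lab v).2 = false) : v (lab v).1 = -‖v‖ := by
  have : ¬ 0 < v (lab v).1 := by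
    intro h'
    rw [(lab_sign v).2 h'] at h
    exact Bool.noConfusion h
  rw [← lab_abs v, abs_of_nonpos (not_lt.1 this), neg_neg]

theorem not_anti {d : ℕ} {v v' : Fin (d + 1) → ℝ} {r : ℝ} (hr : 0 < r) (hv : r ≤ ‖v‖)
    (hv' : r ≤ ‖v'‖) (h : dist v v' < r) : ¬ Anti (lab v) (lab v') := by
  rintro ⟨h1, h2⟩
  have h3 := (dist_le_pi_dist v v' (lab v).1).trans_lt h
  rw [Real.dist_eq, abs_lt] at h3
  cases hb : (lab v).2 <;> cases hb' : (lab v').2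
  · exact h2 (hb.trans hb'.symm)
  · have a := lab_false hb
    have b := lab_true hb'
    rw [← h1] at b
    linarith
  · have a := lab_true hb
    have b := lab_false hb'
    rw [← h1] at b
    linarith
  · exact h2 (hb.trans hb'.symm)

theorem exists_not_anti {d : ℕ} {X : Type*} [PseudoMetricSpace X] (K : Set X) (hK : IsCompact K)
    (h : X → Fin (d + 1) → ℝ) (hc : ContinuousOn h K) (h0 : ∀ x ∈ K, h x ≠ 0) :
    ∃ ε > 0, ∀ x ∈ K, ∀ y ∈ K, dist x y < ε → ¬ Anti (lab (h x)) (lab (h y)) := by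
  rcases K.eq_empty_or_nonempty with rfl | hne
  · exact ⟨1, one_pos, by simp⟩
  obtain ⟨x₀, hx₀, hmin⟩ := hK.exists_isMinOn hne hc.norm
  have hr : 0 < ‖h x₀‖ := norm_pos_iff.2 (h0 x₀ hx₀)
  have hu := hK.uniformContinuousOn_of_continuous hc
  rw [Metric.uniformContinuousOn_iff] at hu
  obtain ⟨ε, hε, hεd⟩ := hu _ hr
  exact ⟨ε, hε, fun x hx y hy hxy => not_anti hr (hmin hx) (hmin hy) (hεd x hx y hy hxy)⟩

theorem homotopy_cochain {e : ℕ} {X : Type*} [PseudoMetricSpace X] (K : Set X) (hK : IsCompact K)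
    (h : X × I → Fin (e + 1 + 1) → ℝ) (hc : ContinuousOn h (K ×ˢ Set.univ))
    (h0 : ∀ x ∈ K, ∀ t, h (x, t) ≠ 0) :
    ∃ ε > 0, ∃ η : (ℕ → X) → ℤ, Deg e η ∧ ∀ w : ℕ → X, (∀ n, w n ∈ K) →
      (∀ i j, dist (w i) (w j) < ε) →
      sig (e + 1) (fun n => lab (h (w n, 1))) - sig (e + 1) (fun n => lab (h (w n, 0))) =
        cob e η w := by
  obtain ⟨ε, hε, hna⟩ := exists_not_anti (K ×ˢ (Set.univ : Set I)) (hK.prod isCompact_univ) h hc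
    (fun x hx => h0 x.1 hx.1 x.2)
  obtain ⟨T, hT⟩ := exists_nat_one_div_lt hε
  let t : ℕ → I := fun τ => Set.projIcc (0 : ℝ) 1 zero_le_one ((τ : ℝ) / (T + 1))
  have ht0 : t 0 = 0 := by
    simp only [t, Nat.cast_zero, zero_div]
    exact Set.projIcc_left (zero_le_one' ℝ)
  have htT : t (T + 1) = 1 := by
    simp only [t, Nat.cast_add, Nat.cast_one]
    rw [div_self (by positivity)]
    exact Set.projIcc_right (zero_le_one' ℝ)
  have htt : ∀ τ, dist (t τ) (t (τ + 1)) < ε := by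
    intro τ
    have := (LipschitzWith.projIcc (zero_le_one' ℝ)).dist_le_mul ((τ : ℝ) / (T + 1))
      (((τ + 1 : ℕ) : ℝ) / (T + 1))
    refine lt_of_le_of_lt this ?_
    rw [Real.dist_eq]
    have e1 : (τ : ℝ) / (T + 1) - ((τ + 1 : ℕ) : ℝ) / (T + 1) = -(1 / (T + 1)) := by
      push_cast; ring
    rw [e1, abs_neg, abs_of_pos (by positivity)]
    simpa using hT
  let Lt : ℕ → X → Label (e + 1) := fun τ x => lab (h (x, t τ))
  refine ⟨ε, hε, fun w => ∑ τ ∈ Finset.range (T + 1),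
    prismCochain (e + 1) (sig (e + 1)) (Lt τ) (Lt (τ + 1)) w, ?_, ?_⟩
  · intro w w' hw
    exact Finset.sum_congr rfl fun τ _ => prismCochain_deg e _ (sig_deg _) _ _ w w' hw
  · intro w hwK hw
    have key : ∀ τ ∈ Finset.range (T + 1),
        sig (e + 1) (fun n => Lt (τ + 1) (w n)) - sig (e + 1) (fun n => Lt τ (w n)) =
        cob e (prismCochain (e + 1) (sig (e + 1)) (Lt τ) (Lt (τ + 1))) w := by
      intro τ _
      refine prism e (sig (e + 1)) (sig_deg _) _ _ w fun i => sig_cocycle _ ?_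
      intro a b _ _
      have hm : ∀ a, ∃ a' τ', (τ' = τ ∨ τ' = τ + 1) ∧
          mix (Lt τ) (Lt (τ + 1)) i w a = lab (h (w a', t τ')) := by
        intro a
        unfold mix
        split_ifs
        · exact ⟨a, τ, Or.inl rfl, rfl⟩
        · exact ⟨a - 1, τ + 1, Or.inr rfl, rfl⟩
      obtain ⟨a', τ₁, h1, h1'⟩ := hm a
      obtain ⟨b', τ₂, h2, h2'⟩ := hm b
      rw [h1', h2']
      refine hna _ ⟨hwK _, trivial⟩ _ ⟨hwK _, trivial⟩ ?_
      rw [Prod.dist_eq]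
      refine max_lt (hw _ _) ?_
      show dist (t τ₁) (t τ₂) < ε
      rcases h1 with rfl | rfl <;> rcases h2 with h2 | h2
      · rw [h2, dist_self]; exact hε
      · rw [h2]; exact htt _
      · rw [h2, dist_comm]; exact htt _
      · rw [h2, dist_self]; exact hε
    have hs := Finset.sum_congr rfl key
    rw [Finset.sum_range_sub (fun τ => sig (e + 1) (fun n => Lt τ (w n)))] at hs
    simp only [Lt, ht0, htT] at hs
    rw [hs]
    unfold cob
    rw [Finset.sum_comm]
    refine Finset.sum_congr rfl fun i _ => ?_
    rw [Finset.mul_sum]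

end Lab

section Vanishing

open Topology

theorem exists_pos_le {k : ℕ} (f : Fin k → ℝ) (hf : ∀ i, 0 < f i) : ∃ ε > 0, ∀ i, ε ≤ f i := by
  have h1 : ∀ᶠ ε in 𝓝[>] (0 : ℝ), ∀ i, ε ≤ f i := by
    rw [Filter.eventually_all]
    intro i
    exact (nhdsWithin_le_nhds) (Iic_mem_nhds (hf i))
  obtain ⟨ε, h2, h3⟩ := (h1.and self_mem_nhdsWithin).exists
  exact ⟨ε, h3, h2⟩

theorem vanishing {e k : ℕ} {X : Type*} [PseudoMetricSpace X] [CompactSpace X]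
    (φ ψ : Fin (k + 1) → X → Fin (e + 1 + 1) → ℝ)
    (hφc : ∀ i, Continuous (φ i)) (hψc : ∀ i, Continuous (ψ i))
    (hφ0 : ∀ i x, φ i x ≠ 0) (hψ0 : ∀ i x, ψ i x ≠ 0)
    (U : Fin (k + 1) → Set X) (hU : ∀ i, IsOpen (U i)) (hUc : (⋃ i, U i) = Set.univ)
    (h : Fin (k + 1) → X × I → Fin (e + 1 + 1) → ℝ)
    (hc : ∀ i, ContinuousOn (h i) (U i ×ˢ Set.univ))
    (h0 : ∀ i, ∀ x ∈ U i, ∀ t, h i (x, t) ≠ 0)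
    (hs : ∀ i, ∀ x ∈ U i, h i (x, 0) = φ i x) (ht : ∀ i, ∀ x ∈ U i, h i (x, 1) = ψ i x) :
    ∃ ε > 0, ∃ H : (ℕ → X) → ℤ, Deg (k * (e + 1) + e) H ∧
      ∀ w : ℕ → X, (∀ i j, dist (w i) (w j) < ε) →
        ∏ i : Fin (k + 1), (sig (e + 1) (fun n => lab (ψ i (w (i * (e + 1) + n)))) -
          sig (e + 1) (fun n => lab (φ i (w (i * (e + 1) + n))))) = cob (k * (e + 1) + e) H w := by
  obtain ⟨δ, hδ, hL⟩ := lebesgue_number_lemma_of_metric isCompact_univ hU hUc.ge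
  let K : Fin (k + 1) → Set X := fun i => {x | ∀ y, y ∉ U i → δ / 2 ≤ dist x y}
  have hKc : ∀ i, IsCompact (K i) := by
    intro i
    refine IsClosed.isCompact ?_
    have : K i = ⋂ y : X, ⋂ (_ : y ∉ U i), {x | δ / 2 ≤ dist x y} := by
      ext x; simp [K]
    rw [this]
    refine isClosed_iInter fun y => isClosed_iInter fun _ => ?_
    exact isClosed_le continuous_const (by fun_prop)
  have hKU : ∀ i, K i ⊆ U i := by
    intro i x hx
    by_contra hxU
    have := hx x hxU
    rw [dist_self] at this
    linarith
  have hhom := fun i => homotopy_cochain (K i) (hKc i) (h i)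
    ((hc i).mono (Set.prod_mono (hKU i) le_rfl)) (fun x hx => h0 i x (hKU i hx))
  choose ε₁ hε₁ η hη hηe using hhom
  have hA := fun i => exists_not_anti Set.univ isCompact_univ (φ i) (hφc i).continuousOn
    (fun x _ => hφ0 i x)
  choose ε₂ hε₂ hA using hA
  have hB := fun i => exists_not_anti Set.univ isCompact_univ (ψ i) (hψc i).continuousOn
    (fun x _ => hψ0 i x)
  choose ε₃ hε₃ hB using hB
  obtain ⟨ε', hε', hle⟩ := exists_pos_le (fun i => min (ε₁ i) (min (ε₂ i) (ε₃ i)))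
    (fun i => lt_min (hε₁ i) (lt_min (hε₂ i) (hε₃ i)))
  let ε := min ε' (δ / 2)
  have hε : 0 < ε := lt_min hε' (by positivity)
  let S : Set (ℕ → X) := {w | ∀ i j, dist (w i) (w j) < ε}
  have hS : SmallSet S := ⟨fun w hw f i j => hw (f i) (f j)⟩
  let z : ℕ → (ℕ → X) → ℤ := fun i w => if hi : i < k + 1 then
    sig (e + 1) (fun n => lab (ψ ⟨i, hi⟩ (w n))) - sig (e + 1) (fun n => lab (φ ⟨i, hi⟩ (w n))) else 0
  let η' : ℕ → (ℕ → X) → ℤ := fun i => if hi : i < k + 1 then η ⟨i, hi⟩ else 0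
  have hz : ∀ i, Deg (e + 1) (z i) := by
    intro i w w' hw
    simp only [z]
    split_ifs with hi
    · congr 1
      · exact sig_deg _ _ _ fun n hn => by rw [hw n hn]
      · exact sig_deg _ _ _ fun n hn => by rw [hw n hn]
    · rfl
  have hη' : ∀ i, Deg e (η' i) := by
    intro i
    simp only [η']
    split_ifs with hi
    · exact hη _
    · intro w w' _; rfl
  have hcl : ∀ i, ∀ w ∈ S, cob (e + 1) (z i) w = 0 := by
    intro i w hw
    by_cases hi : i < k + 1
    · have h1 : cob (e + 1) (sig (e + 1)) (fun n => lab (ψ ⟨i, hi⟩ (w n))) = 0 := by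
        refine sig_cocycle _ fun a b _ _ => hB ⟨i, hi⟩ _ trivial _ trivial ?_
        exact (hw a b).trans_le ((min_le_left _ _).trans ((hle ⟨i, hi⟩).trans
          ((min_le_right _ _).trans (min_le_right _ _))))
      have h2 : cob (e + 1) (sig (e + 1)) (fun n => lab (φ ⟨i, hi⟩ (w n))) = 0 := by
        refine sig_cocycle _ fun a b _ _ => hA ⟨i, hi⟩ _ trivial _ trivial ?_
        exact (hw a b).trans_le ((min_le_left _ _).trans ((hle ⟨i, hi⟩).trans
          ((min_le_right _ _).trans (min_le_left _ _))))
      unfold cob at h1 h2 ⊢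
      simp only [z, hi, dif_pos, mul_sub, Finset.sum_sub_distrib]
      rw [h1, h2, sub_zero]
    · refine Finset.sum_eq_zero fun x _ => ?_
      simp only [z, hi, dif_neg, not_false_eq_true, mul_zero]
  obtain ⟨H, hH, hHe⟩ := Zc_cohomologous e z (fun i w => z i w - cob e (η' i) w) η' hz hη' S hS hcl
    (fun _ _ => rfl) k
  refine ⟨ε, hε, H, hH, fun w hw => ?_⟩
  rw [← hHe w hw]
  rw [Zc_eq, Zc_eq, Finset.prod_range, Finset.prod_range]
  have hzero : ∏ i : Fin (k + 1), (z i (fun n => w (i * (e + 1) + n)) -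
      cob e (η' i) (fun n => w (i * (e + 1) + n))) = 0 := by
    obtain ⟨i, hi⟩ := hL (w 0) trivial
    refine Finset.prod_eq_zero (Finset.mem_univ i) ?_
    have hwK : ∀ n, w n ∈ K i := by
      intro n y hy
      have h1 : δ ≤ dist (w 0) y := by
        by_contra hlt
        exact hy (hi (by rw [Metric.mem_ball, dist_comm]; exact not_le.1 hlt))
      have h2 : dist (w 0) (w n) < δ / 2 := (hw 0 n).trans_le (min_le_right _ _)
      have h3 := dist_triangle (w 0) (w n) y
      linarith
    have h1 := hηe i (fun n => w (i * (e + 1) + n)) (fun n => hwK _) (fun a b => (hw _ _).trans_le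
      ((min_le_left _ _).trans ((hle i).trans (min_le_left _ _))))
    simp only [η', z, i.2, dif_pos, Fin.eta]
    rw [← h1]
    simp only [hs i _ (hKU i (hwK _)), ht i _ (hKU i (hwK _))]
    ring
  rw [hzero, sub_zero]
  refine Finset.prod_congr rfl fun i _ => ?_
  simp only [z, i.2, dif_pos, Fin.eta]

end Vanishing

section Cycle

/-- the simplices of the fundamental cycle of the torus -/
def wseq {N D : ℕ} (g : Fin D → ZMod N) (ρ : Equiv.Perm (Fin D)) (t : ℕ) (a : Fin D) : ZMod N :=
  g a + if (ρ a : ℕ) < t then 1 else 0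

theorem cycle_inner {N E : ℕ} [NeZero N] (η : (ℕ → Fin (E + 1) → ZMod N) → ℤ) (i : ℕ)
    (hi0 : 0 < i) (hi : i < E + 1) (g : Fin (E + 1) → ZMod N) :
    ∑ ρ : Equiv.Perm (Fin (E + 1)), (Equiv.Perm.sign ρ : ℤ) * η (fun n => wseq g ρ (skip i n)) = 0 := by
  let s : Equiv.Perm (Fin (E + 1)) := Equiv.swap ⟨i - 1, by omega⟩ ⟨i, hi⟩
  have hs : Equiv.Perm.sign s = -1 := by
    refine Equiv.Perm.sign_swap ?_
    intro h
    have := congrArg Fin.val h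
    simp only at this
    omega
  have key := Equiv.sum_comp (Equiv.mulLeft s)
    (fun ρ => (Equiv.Perm.sign ρ : ℤ) * η (fun n => wseq g ρ (skip i n)))
  have h2 : ∀ ρ : Equiv.Perm (Fin (E + 1)), (fun n => wseq g (s * ρ) (skip i n)) =
      fun n => wseq g ρ (skip i n) := by
    intro ρ
    funext n a
    unfold wseq
    congr 1
    have hne : skip i n ≠ i := by unfold skip; split_ifs <;> omega
    have : ((s * ρ) a : ℕ) < skip i n ↔ (ρ a : ℕ) < skip i n := by
      rw [Equiv.Perm.mul_apply]
      simp only [s, Equiv.swap_apply_def]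
      split_ifs with h1 h1
      · rw [h1]; simp only; omega
      · rw [h1]; simp only; omega
      · rfl
    simp only [this]
  simp only [Equiv.coe_mulLeft, h2, Equiv.Perm.sign_mul, hs] at key
  simp only [Units.val_neg, neg_mul, one_mul,
    Finset.sum_neg_distrib] at key
  linarith

theorem cycle_outer {N E : ℕ} [NeZero N] (η : (ℕ → Fin (E + 1) → ZMod N) → ℤ) (hη : Deg E η) :
    ∑ g : Fin (E + 1) → ZMod N, ∑ ρ : Equiv.Perm (Fin (E + 1)),
      (Equiv.Perm.sign ρ : ℤ) * η (fun n => wseq g ρ (skip 0 n)) =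
    (-1) ^ E * ∑ g : Fin (E + 1) → ZMod N, ∑ ρ : Equiv.Perm (Fin (E + 1)),
      (Equiv.Perm.sign ρ : ℤ) * η (fun n => wseq g ρ (skip (E + 1) n)) := by
  let r : Equiv.Perm (Fin (E + 1)) := finRotate (E + 1)
  have hr : Equiv.Perm.sign r⁻¹ = (-1) ^ E := by
    rw [Equiv.Perm.sign_inv, sign_finRotate, Nat.add_sub_cancel]
  rw [Finset.sum_comm, Finset.mul_sum]
  simp only [Finset.mul_sum]
  rw [Finset.sum_comm (s := (Finset.univ : Finset (Fin (E + 1) → ZMod N)))]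
  rw [← Equiv.sum_comp (Equiv.mulLeft r⁻¹)
    (fun ρ => ∑ g : Fin (E + 1) → ZMod N, (-1) ^ E * ((Equiv.Perm.sign ρ : ℤ) * η (fun n => wseq g ρ (skip (E + 1) n))))]
  refine Finset.sum_congr rfl fun ρ _ => ?_
  let c : Fin (E + 1) → ZMod N := fun a => if ρ a = 0 then 1 else 0
  rw [← Equiv.sum_comp (Equiv.addRight c)
    (fun g => (-1) ^ E * ((Equiv.Perm.sign (Equiv.mulLeft r⁻¹ ρ) : ℤ) *
      η (fun n => wseq g (Equiv.mulLeft r⁻¹ ρ) (skip (E + 1) n))))]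
  refine Finset.sum_congr rfl fun g _ => ?_
  rw [Equiv.coe_mulLeft, Equiv.Perm.sign_mul, hr, Units.val_mul, ← mul_assoc, ← mul_assoc]
  have hsg : (-1 : ℤ) ^ E * (((-1) ^ E : ℤˣ) : ℤ) = 1 := by
    push_cast
    rw [← mul_pow]; simp
  rw [hsg, one_mul]
  congr 1
  refine hη _ _ fun n hn => ?_
  funext a
  have e1 : skip 0 n = n + 1 := by simp [skip]
  have e2 : skip (E + 1) n = n := by simp [skip]; omega
  rw [e1, e2]
  unfold wseq
  show g a + (if (ρ a : ℕ) < n + 1 then 1 else 0) = (g a + (if ρ a = 0 then 1 else 0)) +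
    (if ((r⁻¹ (ρ a) : Fin (E + 1)) : ℕ) < n then 1 else 0)
  have hrr : ∀ b : Fin (E + 1), ((r⁻¹ b : Fin (E + 1)) : ℕ) = if b = 0 then E else (b : ℕ) - 1 := by
    intro b
    split_ifs with hb
    · have : r⁻¹ b = Fin.last E := by
        rw [Equiv.Perm.inv_eq_iff_eq]
        simp only [r, finRotate_last]
        exact hb
      rw [this]; rfl
    · have hb' : (b : ℕ) ≠ 0 := fun h => hb (Fin.ext h)
      have : r⁻¹ b = ⟨(b : ℕ) - 1, by omega⟩ := by
        rw [Equiv.Perm.inv_eq_iff_eq]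
        simp only [r]
        rw [finRotate_of_lt (by omega)]
        ext
        simp only
        omega
      rw [this]
  rw [hrr]
  by_cases hb : ρ a = 0
  · have h3 : ¬ E < n := by omega
    simp [hb, h3]
  · have hb' : (ρ a : ℕ) ≠ 0 := fun h => hb (Fin.ext h)
    rw [if_neg hb, if_neg hb]
    have : (ρ a : ℕ) < n + 1 ↔ (ρ a : ℕ) - 1 < n := by omega
    simp only [this, add_zero]

theorem cycle_cob {N E : ℕ} [NeZero N] (η : (ℕ → Fin (E + 1) → ZMod N) → ℤ) (hη : Deg E η) :
    ∑ g : Fin (E + 1) → ZMod N, ∑ ρ : Equiv.Perm (Fin (E + 1)),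
      (Equiv.Perm.sign ρ : ℤ) * cob E η (wseq g ρ) = 0 := by
  let A : ℕ → ℤ := fun i => ∑ g : Fin (E + 1) → ZMod N, ∑ ρ : Equiv.Perm (Fin (E + 1)),
      (Equiv.Perm.sign ρ : ℤ) * η (fun n => wseq g ρ (skip i n))
  have h1 : ∑ g : Fin (E + 1) → ZMod N, ∑ ρ : Equiv.Perm (Fin (E + 1)),
      (Equiv.Perm.sign ρ : ℤ) * cob E η (wseq g ρ) = ∑ i ∈ Finset.range (E + 2), (-1) ^ i * A i := by
    simp only [A, cob, Finset.mul_sum]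
    rw [Finset.sum_comm (s := Finset.range (E + 2))]
    refine Finset.sum_congr rfl fun g _ => ?_
    rw [Finset.sum_comm (s := Finset.range (E + 2))]
    refine Finset.sum_congr rfl fun ρ _ => Finset.sum_congr rfl fun i _ => ?_
    ring
  rw [h1, Finset.sum_range_succ, Finset.sum_range_succ']
  have h2 : ∑ i ∈ Finset.range E, (-1 : ℤ) ^ (i + 1) * A (i + 1) = 0 := by
    refine Finset.sum_eq_zero fun i hi => ?_
    have hi' := Finset.mem_range.1 hi
    have : A (i + 1) = 0 :=
      Finset.sum_eq_zero fun g _ => cycle_inner η (i + 1) (by omega) (by omega) g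
    rw [this, mul_zero]
  have h3 : A 0 = (-1) ^ E * A (E + 1) := cycle_outer η hη
  rw [h2, h3]
  ring

end Cycle

section QMap

noncomputable def cmx (z : Circle) : ℝ := max |(z : ℂ).re| |(z : ℂ).im|
noncomputable def cim (z : Circle) : ℝ := (z : ℂ).im / cmx z
noncomputable def cre (z : Circle) : ℝ := (z : ℂ).re / cmx z
def CLow (z : Circle) : Prop := |(z : ℂ).im| < (z : ℂ).re
def CHigh (z : Circle) : Prop := |(z : ℂ).re| ≤ (z : ℂ).im

theorem cmx_pos (z : Circle) : 0 < cmx z := by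
  unfold cmx
  by_contra h
  have h1 : |(z : ℂ).re| ≤ 0 := (le_max_left _ _).trans (not_lt.1 h)
  have h2 : |(z : ℂ).im| ≤ 0 := (le_max_right _ _).trans (not_lt.1 h)
  have h3 : (z : ℂ) = 0 := Complex.ext (abs_nonpos_iff.1 h1) (abs_nonpos_iff.1 h2)
  exact z.coe_ne_zero h3

theorem continuous_cmx : Continuous cmx := by
  unfold cmx
  exact (Complex.continuous_re.comp continuous_subtype_val).abs.max
    (Complex.continuous_im.comp continuous_subtype_val).abs

theorem continuous_cim : Continuous cim :=
  (Complex.continuous_im.comp continuous_subtype_val).div continuous_cmx fun z => (cmx_pos z).ne'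

theorem continuous_cre : Continuous cre :=
  (Complex.continuous_re.comp continuous_subtype_val).div continuous_cmx fun z => (cmx_pos z).ne'

theorem abs_cim_le (z : Circle) : |cim z| ≤ 1 := by
  unfold cim
  rw [abs_div, abs_of_pos (cmx_pos z), div_le_one (cmx_pos z)]
  exact le_max_right _ _

theorem cre_le (z : Circle) : cre z ≤ 1 := by
  unfold cre
  rw [div_le_one (cmx_pos z)]
  exact (le_abs_self _).trans (le_max_left _ _)

theorem abs_cim_eq {z : Circle} (h : |(z : ℂ).re| ≤ |(z : ℂ).im|) : |cim z| = 1 := by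
  unfold cim
  rw [abs_div, abs_of_pos (cmx_pos z)]
  unfold cmx
  rw [max_eq_right h]
  have := cmx_pos z
  unfold cmx at this
  rw [max_eq_right h] at this
  exact div_self this.ne'

theorem abs_cre_eq {z : Circle} (h : |(z : ℂ).im| ≤ |(z : ℂ).re|) : |cre z| = 1 := by
  unfold cre
  rw [abs_div, abs_of_pos (cmx_pos z)]
  unfold cmx
  rw [max_eq_left h]
  have := cmx_pos z
  unfold cmx at this
  rw [max_eq_left h] at this
  exact div_self this.ne'

theorem CHigh.cim {z : Circle} (h : CHigh z) : cim z = 1 := by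
  have h0 : 0 ≤ (z : ℂ).im := (abs_nonneg _).trans h
  have h1 : |_root_.cim z| = 1 := abs_cim_eq (by rw [abs_of_nonneg h0]; exact h)
  rwa [abs_of_nonneg (show 0 ≤ _root_.cim z from div_nonneg h0 (cmx_pos z).le)] at h1

theorem chigh_of_cim {z : Circle} (h : cim z = 1) : CHigh z := by
  unfold cim at h
  rw [div_eq_one_iff_eq (cmx_pos z).ne'] at h
  unfold CHigh
  rw [h]
  exact le_max_left _ _

theorem CLow.cre {z : Circle} (h : CLow z) : cre z = 1 := by
  have h0 : 0 < (z : ℂ).re := (abs_nonneg _).trans_lt h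
  have h1 : |_root_.cre z| = 1 := abs_cre_eq (by rw [abs_of_pos h0]; exact le_of_lt h)
  rwa [abs_of_pos (show 0 < _root_.cre z from div_pos h0 (cmx_pos z))] at h1

theorem CLow.abs_cim {z : Circle} (h : CLow z) : |cim z| < 1 := by
  unfold cim
  rw [abs_div, abs_of_pos (cmx_pos z), div_lt_one (cmx_pos z)]
  exact (lt_of_lt_of_le h (le_abs_self _)).trans_le (le_max_left _ _)

/-- the degree one map from the torus to the cube boundary -/
noncomputable def qmap {d : ℕ} (z : Fin d → Circle) : Fin (d + 1) → ℝ :=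
  Fin.cons (max (-1) (1 - ∑ l, (1 - cre (z l)))) (fun l => cim (z l))

theorem qmap_zero {d : ℕ} (z : Fin d → Circle) :
    qmap z 0 = max (-1) (1 - ∑ l, (1 - cre (z l))) := rfl

theorem qmap_succ {d : ℕ} (z : Fin d → Circle) (l : Fin d) : qmap z l.succ = cim (z l) := rfl

theorem continuous_qmap {d : ℕ} : Continuous (qmap (d := d)) := by
  refine continuous_pi fun j => ?_
  refine Fin.cases ?_ (fun l => ?_) j
  · simp only [qmap_zero]
    refine continuous_const.max (continuous_const.sub (continuous_finsetSum _ fun l _ => ?_))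
    exact continuous_const.sub (continuous_cre.comp (continuous_apply l))
  · simp only [qmap_succ]
    exact continuous_cim.comp (continuous_apply l)

theorem qmap_sum_nonneg {d : ℕ} (z : Fin d → Circle) : 0 ≤ ∑ l, (1 - cre (z l)) :=
  Finset.sum_nonneg fun l _ => by linarith [cre_le (z l)]

theorem qmap_norm {d : ℕ} (z : Fin d → Circle) : ‖qmap z‖ = 1 := by
  refine le_antisymm ?_ ?_
  · refine (pi_norm_le_iff_of_nonneg zero_le_one).2 fun j => ?_
    refine Fin.cases ?_ (fun l => ?_) j
    · rw [qmap_zero, Real.norm_eq_abs, abs_le]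
      exact ⟨le_max_left _ _, max_le (by norm_num) (by linarith [qmap_sum_nonneg z])⟩
    · rw [qmap_succ]
      exact abs_cim_le _
  · by_cases h : ∃ l, |(z l : ℂ).re| ≤ |(z l : ℂ).im|
    · obtain ⟨l, hl⟩ := h
      rw [← abs_cim_eq hl, ← qmap_succ]
      exact norm_le_pi_norm (qmap z) l.succ
    · push Not at h
      refine le_trans ?_ (norm_le_pi_norm (qmap z) 0)
      rw [qmap_zero, Real.norm_eq_abs]
      by_cases h2 : ∃ l, cre (z l) = -1
      · obtain ⟨l, hl⟩ := h2
        have : 1 - cre (z l) ≤ ∑ l, (1 - cre (z l)) :=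
          Finset.single_le_sum (f := fun l => 1 - cre (z l))
            (fun i _ => by linarith [cre_le (z i)]) (Finset.mem_univ l)
        rw [hl] at this
        rw [max_eq_left (by linarith)]
        norm_num
      · push Not at h2
        have : ∀ l, cre (z l) = 1 := by
          intro l
          rcases eq_or_eq_neg_of_abs_eq (abs_cre_eq (h l).le) with h3 | h3
          · exact h3
          · exact absurd h3 (h2 l)
        simp [this]

theorem qmap_ne {d : ℕ} (z : Fin d → Circle) : qmap z ≠ 0 := by
  intro h
  have := qmap_norm z
  rw [h, norm_zero] at this
  exact zero_ne_one this

theorem lab_q_low {d : ℕ} {z : Fin d → Circle} (h1 : (lab (qmap z)).1 = 0)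
    (h2 : (lab (qmap z)).2 = true) (l : Fin d) : CLow (z l) := by
  have h3 := lab_true h2
  rw [h1, qmap_norm, qmap_zero] at h3
  have h4 : ∑ l, (1 - cre (z l)) = 0 := by
    have := qmap_sum_nonneg z
    rcases max_choice (-1 : ℝ) (1 - ∑ l, (1 - cre (z l))) with h | h
    · rw [h] at h3; norm_num at h3
    · rw [h] at h3; linarith
  have h5 := (Finset.sum_eq_zero_iff_of_nonneg
    (fun i _ => by linarith [cre_le (z i)])).1 h4 l (Finset.mem_univ l)
  have h6 : |cim (z l)| ≠ 1 := by
    intro h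
    have := lab_max (qmap z) l.succ (by rw [qmap_norm, qmap_succ]; exact h)
    rw [h1] at this
    exact absurd this (not_le.2 (Fin.succ_pos l))
  have h7 : cre (z l) = 1 := by linarith
  unfold cre at h7
  rw [div_eq_one_iff_eq (cmx_pos _).ne'] at h7
  unfold CLow
  by_contra h8
  apply h6
  refine abs_cim_eq ?_
  have h9 := cmx_pos (z l)
  rw [← h7] at h9
  rw [abs_of_pos h9]
  exact not_lt.1 h8

theorem lab_q_high {d : ℕ} {z : Fin d → Circle} {l : Fin d} (h1 : (lab (qmap z)).1 = l.succ)
    (h2 : (lab (qmap z)).2 = true) : CHigh (z l) := by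
  have h3 := lab_true h2
  rw [h1, qmap_norm, qmap_succ] at h3
  exact chigh_of_cim h3

theorem lab_q_LH {d : ℕ} {z : Fin d → Circle} (h : ∀ l, CLow (z l) ∨ CHigh (z l)) :
    (lab (qmap z)).2 = true ∧ ∀ l, CHigh (z l) → l.succ ≤ (lab (qmap z)).1 := by
  have hmax : ∀ l, CHigh (z l) → l.succ ≤ (lab (qmap z)).1 := by
    intro l hl
    refine lab_max _ _ ?_
    rw [qmap_norm, qmap_succ, hl.cim, abs_one]
  refine ⟨?_, hmax⟩
  rw [lab_sign]
  rcases Fin.eq_zero_or_eq_succ (lab (qmap z)).1 with h0 | ⟨l, hl⟩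
  · rw [h0, qmap_zero]
    have : ∀ l, cre (z l) = 1 := by
      intro l
      rcases h l with h1 | h1
      · exact h1.cre
      · have := hmax l h1
        rw [h0] at this
        exact absurd this (not_le.2 (Fin.succ_pos l))
    simp [this]
  · rw [hl, qmap_succ]
    have h1 := lab_abs (qmap z)
    rw [hl, qmap_succ, qmap_norm] at h1
    rcases h l with h2 | h2
    · exact absurd h1 h2.abs_cim.ne
    · rw [h2.cim]; exact one_pos

end QMap

section Degree

theorem sig_one {d : ℕ} (L : ℕ → Label d) (h : ∀ n : Fin (d + 1), L n = (n, true)) :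
    sig d L = 1 := by
  unfold sig
  have : (Matrix.of fun i : Fin (d + 1) => lrow (L i)) = 1 := by
    ext i j
    simp only [Matrix.of_apply, h i, lrow, if_true, Matrix.one_apply, Pi.single_apply, eq_comm]
  rw [this, Matrix.det_one]

theorem sig_ne {d : ℕ} (L : ℕ → Label d) (h : sig d L ≠ 0) :
    (∀ n : Fin (d + 1), (L n).2 = true) ∧ Function.Bijective (fun n : Fin (d + 1) => (L n).1) := by
  have h1 : ∀ n : Fin (d + 1), (L n).2 = true := by
    intro n
    by_contra hn
    apply h
    unfold sig
    refine Matrix.det_eq_zero_of_row_eq_zero n fun j => ?_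
    simp [lrow, hn]
  refine ⟨h1, ?_⟩
  rw [← Finite.injective_iff_bijective]
  intro i j hij
  by_contra hne
  apply h
  refine sig_zero L i j hne (Prod.ext hij ?_)
  rw [h1 i, h1 j]

theorem not_low_high {z : Circle} (h1 : CLow z) (h2 : CHigh z) : False := by
  unfold CLow at h1
  unfold CHigh at h2
  have := le_abs_self (z : ℂ).im
  have := le_abs_self (z : ℂ).re
  linarith

theorem degree_ne {d : ℕ} (a b : Fin d → Circle) (sw : Fin d → ℕ) (t0 : ℕ)
    (hab : ∀ l, ¬ (CHigh (a l) ∧ CLow (b l)))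
    (h : sig d (fun n => lab (qmap (fun l => if sw l < t0 + n then b l else a l))) ≠ 0) :
    sig d (fun n => lab (qmap (fun l => if sw l < t0 + n then b l else a l))) = 1 ∧
      ∀ l, sw l = t0 + l := by
  set Z : ℕ → Fin d → Circle := fun n l => if sw l < t0 + n then b l else a l with hZ
  obtain ⟨ht, hinj, hsurj⟩ := sig_ne _ h
  obtain ⟨n0, hn0⟩ := hsurj 0
  have hlow : ∀ l, CLow (Z n0 l) := fun l => lab_q_low hn0 (ht n0) l
  have hhigh : ∀ l, ∃ n : Fin (d + 1), CHigh (Z n l) := by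
    intro l
    obtain ⟨n, hn⟩ := hsurj l.succ
    exact ⟨n, lab_q_high hn (ht n)⟩
  have hab2 : ∀ l, CLow (a l) ∧ CHigh (b l) := by
    intro l
    obtain ⟨n, hn⟩ := hhigh l
    have hl := hlow l
    simp only [hZ] at hn hl
    split_ifs at hn hl with h1 h2 h2
    · exact (not_low_high hl hn).elim
    · exact ⟨hl, hn⟩
    · exact (hab l ⟨hn, hl⟩).elim
    · exact (not_low_high hl hn).elim
  have hLH : ∀ n l, CLow (Z n l) ∨ CHigh (Z n l) := by
    intro n l
    simp only [hZ]
    split_ifs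
    · exact Or.inr (hab2 l).2
    · exact Or.inl (hab2 l).1
  have hZh : ∀ n l, CHigh (Z n l) ↔ sw l < t0 + n := by
    intro n l
    simp only [hZ]
    split_ifs with h1
    · simp [h1, (hab2 l).2]
    · simp only [h1, iff_false]
      exact fun h2 => not_low_high (hab2 l).1 h2
  have hmono : Monotone (fun n : Fin (d + 1) => (lab (qmap (Z n))).1) := by
    intro n n' hnn
    simp only
    rcases Fin.eq_zero_or_eq_succ (lab (qmap (Z n))).1 with h0 | ⟨l, hl⟩
    · rw [h0]; exact Fin.zero_le _
    · rw [hl]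
      refine (lab_q_LH (hLH n')).2 l ?_
      have h2 := (hZh _ _).1 (lab_q_high hl (ht n))
      rw [hZh]
      have : (n : ℕ) ≤ n' := hnn
      omega
  have hid : ∀ n : Fin (d + 1), (lab (qmap (Z n))).1 = n := by
    intro n
    have hs : StrictMono (fun n : Fin (d + 1) => (lab (qmap (Z n))).1) :=
      hmono.strictMono_of_injective hinj
    exact le_antisymm (hs.apply_le (x := n)) (hs.le_apply (x := n))
  refine ⟨sig_one _ fun n => Prod.ext (hid n) (ht n), fun l => ?_⟩
  have h1 := (hZh _ _).1 (lab_q_high (l := l) (hid l.succ) (ht l.succ))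
  have h2 : ¬ sw l < t0 + l := by
    rw [← hZh]
    intro hh
    have h3 := (lab_q_LH (hLH l)).2 l hh
    have h4 := hid l.castSucc
    simp only [Fin.val_castSucc] at h4
    rw [h4] at h3
    exact absurd h3 (not_le.2 Fin.castSucc_lt_succ)
  rw [Fin.val_succ] at h1
  omega

theorem degree_eq_one {d : ℕ} (a b : Fin d → Circle) (sw : Fin d → ℕ) (t0 : ℕ)
    (ha : ∀ l, CLow (a l)) (hb : ∀ l, CHigh (b l)) (hsw : ∀ l, sw l = t0 + l) :
    sig d (fun n => lab (qmap (fun l => if sw l < t0 + n then b l else a l))) = 1 := by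
  refine sig_one _ fun n => ?_
  set Z : Fin d → Circle := fun l => if sw l < t0 + n then b l else a l with hZ
  have hLH : ∀ l, CLow (Z l) ∨ CHigh (Z l) := by
    intro l
    simp only [hZ]
    split_ifs
    · exact Or.inr (hb l)
    · exact Or.inl (ha l)
  have hZh : ∀ l, CHigh (Z l) ↔ (l : ℕ) < n := by
    intro l
    simp only [hZ, hsw]
    split_ifs with h1
    · simp only [hb l, true_iff]; omega
    · constructor
      · exact fun h2 => (not_low_high (ha l) h2).elim
      · intro h2; omega
  obtain ⟨h1, h2⟩ := lab_q_LH hLH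
  refine Prod.ext (le_antisymm ?_ ?_) h1
  · show (lab (qmap Z)).1 ≤ n
    rcases Fin.eq_zero_or_eq_succ (lab (qmap Z)).1 with h0 | ⟨l, hl⟩
    · rw [h0]; exact Fin.zero_le _
    · rw [hl]
      have := (hZh l).1 (lab_q_high hl h1)
      rw [Fin.le_def, Fin.val_succ]
      omega
  · show n ≤ (lab (qmap Z)).1
    rcases Fin.eq_zero_or_eq_succ n with h0 | ⟨l, hl⟩
    · rw [h0]; exact Fin.zero_le _
    · rw [hl]
      refine h2 l ((hZh l).2 ?_)
      rw [hl, Fin.val_succ]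
      omega

end Degree

section CircleFacts

theorem toCircle_nat {N : ℕ} [NeZero N] (j : ℕ) :
    (ZMod.toCircle (j : ZMod N) : ℂ) = Complex.exp (((2 * Real.pi * j / N : ℝ) : ℂ) * Complex.I) := by
  rw [ZMod.toCircle_natCast]
  congr 1
  push_cast
  ring

theorem toCircle_nat_re {N : ℕ} [NeZero N] (j : ℕ) :
    (ZMod.toCircle (j : ZMod N) : ℂ).re = Real.cos (2 * Real.pi * j / N) := by
  rw [toCircle_nat, Complex.exp_ofReal_mul_I_re]

theorem toCircle_nat_im {N : ℕ} [NeZero N] (j : ℕ) :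
    (ZMod.toCircle (j : ZMod N) : ℂ).im = Real.sin (2 * Real.pi * j / N) := by
  rw [toCircle_nat, Complex.exp_ofReal_mul_I_im]

theorem angle_eq (M j : ℕ) : 2 * Real.pi * (j : ℝ) / ((8 * (M + 1) : ℕ) : ℝ) =
    Real.pi / 4 * ((j : ℝ) / (M + 1)) := by
  have : (M : ℝ) + 1 ≠ 0 := by positivity
  push_cast
  field_simp
  ring

theorem no_turn_back {M : ℕ} (j : ZMod (8 * (M + 1))) :
    ¬ (CHigh (ZMod.toCircle j) ∧ CLow (ZMod.toCircle (j + 1))) := by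
  rintro ⟨h1, h2⟩
  rw [AddChar.map_add_eq_mul] at h2
  unfold CHigh at h1
  unfold CLow at h2
  have hr := toCircle_nat_re (N := 8 * (M + 1)) 1
  have hi := toCircle_nat_im (N := 8 * (M + 1)) 1
  rw [angle_eq] at hr hi
  rw [Nat.cast_one] at hr hi
  rw [Circle.coe_mul, Complex.mul_re, Complex.mul_im, hr, hi] at h2
  set x := (ZMod.toCircle j : ℂ).re
  set y := (ZMod.toCircle j : ℂ).im
  set θ := Real.pi / 4 * (((1 : ℕ) : ℝ) / ((M : ℝ) + 1)) with hθ
  have hle : ((1 : ℕ) : ℝ) / ((M : ℝ) + 1) ≤ 1 := by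
    rw [div_le_one (by positivity)]
    push_cast
    linarith [(Nat.cast_nonneg M : (0 : ℝ) ≤ M)]
  have hpi := Real.pi_pos
  have hθ0 : 0 < θ := by positivity
  have hθ1 : θ ≤ Real.pi / 4 := by
    rw [hθ]
    nlinarith
  have hs : 0 < Real.sin θ := Real.sin_pos_of_pos_of_lt_pi hθ0 (by linarith)
  have hcs : Real.sin θ ≤ Real.cos θ := by
    have a1 : Real.sin θ ≤ Real.sin (Real.pi / 4) :=
      Real.sin_le_sin_of_le_of_le_pi_div_two (by linarith) (by linarith) hθ1
    have a2 : Real.cos (Real.pi / 4) ≤ Real.cos θ :=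
      Real.cos_le_cos_of_nonneg_of_le_pi hθ0.le (by linarith) hθ1
    rw [Real.sin_pi_div_four] at a1
    rw [Real.cos_pi_div_four] at a2
    linarith
  have hx := le_abs_self x
  have hy : 0 ≤ y := (abs_nonneg x).trans h1
  have h3 := (le_abs_self _).trans_lt h2
  nlinarith [mul_nonneg (sub_nonneg.2 (hx.trans h1)) (sub_nonneg.2 hcs), mul_nonneg hy hs.le]

theorem exists_turn (M : ℕ) : ∃ j : ZMod (8 * (M + 1)),
    CLow (ZMod.toCircle j) ∧ CHigh (ZMod.toCircle (j + 1)) := by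
  refine ⟨((M : ℕ) : ZMod (8 * (M + 1))), ?_, ?_⟩
  · unfold CLow
    rw [toCircle_nat_re, toCircle_nat_im, angle_eq]
    set θ := Real.pi / 4 * ((M : ℝ) / ((M : ℝ) + 1)) with hθ
    have hpi := Real.pi_pos
    have hθ0 : 0 ≤ θ := by positivity
    have hle : (M : ℝ) / ((M : ℝ) + 1) < 1 := by
      rw [div_lt_one (by positivity)]
      linarith
    have hθ1 : θ < Real.pi / 4 := by
      rw [hθ]
      nlinarith
    have hs : 0 ≤ Real.sin θ := Real.sin_nonneg_of_nonneg_of_le_pi hθ0 (by linarith)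
    rw [abs_of_nonneg hs]
    have a1 : Real.sin θ < Real.sin (Real.pi / 4) :=
      Real.sin_lt_sin_of_lt_of_le_pi_div_two (by linarith) (by linarith) hθ1
    have a2 : Real.cos (Real.pi / 4) < Real.cos θ :=
      Real.cos_lt_cos_of_nonneg_of_le_pi hθ0 (by linarith) hθ1
    rw [Real.sin_pi_div_four] at a1
    rw [Real.cos_pi_div_four] at a2
    linarith
  · have : ((M : ℕ) : ZMod (8 * (M + 1))) + 1 = ((M + 1 : ℕ) : ZMod (8 * (M + 1))) := by push_cast; rfl
    rw [this]
    unfold CHigh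
    rw [toCircle_nat_re, toCircle_nat_im, angle_eq]
    have h1 : ((M + 1 : ℕ) : ℝ) / ((M : ℝ) + 1) = 1 := by
      push_cast
      exact div_self (by positivity)
    rw [h1, mul_one, Real.sin_pi_div_four, Real.cos_pi_div_four, abs_of_nonneg (by positivity)]

theorem dist_turn (M : ℕ) (j : ZMod (8 * (M + 1))) :
    dist (ZMod.toCircle (j + 1)) (ZMod.toCircle j) ≤ 1 / ((M : ℝ) + 1) := by
  rw [AddChar.map_add_eq_mul]
  show dist ((ZMod.toCircle j * ZMod.toCircle (1 : ZMod (8 * (M + 1))) : Circle) : ℂ)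
    (ZMod.toCircle j : ℂ) ≤ _
  rw [Complex.dist_eq, Circle.coe_mul]
  have e1 : (ZMod.toCircle j : ℂ) * (ZMod.toCircle (1 : ZMod (8 * (M + 1))) : ℂ) -
      (ZMod.toCircle j : ℂ) = (ZMod.toCircle j : ℂ) *
        ((ZMod.toCircle (1 : ZMod (8 * (M + 1))) : ℂ) - 1) := by ring
  rw [e1, norm_mul, Circle.norm_coe, one_mul]
  have h1 := toCircle_nat (N := 8 * (M + 1)) 1
  rw [angle_eq, Nat.cast_one, mul_comm _ Complex.I] at h1
  rw [h1]
  refine Real.norm_exp_I_mul_ofReal_sub_one_le.trans ?_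
  have hpi := Real.pi_pos
  rw [Real.norm_eq_abs, abs_of_nonneg (by positivity)]
  have : Real.pi / 4 ≤ 1 := by linarith [Real.pi_le_four]
  rw [Nat.cast_one]
  have h3 : 0 ≤ 1 / ((M : ℝ) + 1) := by positivity
  nlinarith

end CircleFacts

section Core

/-- blocks of coordinates -/
def blk (k e : ℕ) : Fin (k + 1) × Fin (e + 1) ≃ Fin (k * (e + 1) + e + 1) :=
  finProdFinEquiv.trans (finCongr (by ring))

theorem blk_val {k e : ℕ} (c : Fin (k + 1)) (l : Fin (e + 1)) :
    (blk k e (c, l) : ℕ) = c * (e + 1) + l := by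
  simp [blk, finProdFinEquiv]
  ring

def blockOf {k e : ℕ} {A : Type*} (c : Fin (k + 1)) (x : Fin (k * (e + 1) + e + 1) → A) :
    Fin (e + 1) → A := fun l => x (blk k e (c, l))

theorem sign_block {k e : ℕ} (ρ : Equiv.Perm (Fin (k * (e + 1) + e + 1)))
    (τ : Equiv.Perm (Fin (k + 1))) (h : ∀ i l, ρ (blk k e (τ i, l)) = blk k e (i, l)) :
    Equiv.Perm.sign ρ = (Equiv.Perm.sign τ) ^ (e + 1) := by
  have h1 : ρ = (blk k e).permCongr (Equiv.prodCongrLeft (fun _ : Fin (e + 1) => τ⁻¹)) := by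
    ext x
    obtain ⟨⟨c, l⟩, rfl⟩ := (blk k e).surjective x
    have := h (τ⁻¹ c) l
    rw [show τ (τ⁻¹ c) = c from τ.apply_symm_apply c] at this
    rw [this]
    simp [Equiv.permCongr_apply, Equiv.prodCongrLeft_apply]
  rw [h1, Equiv.Perm.sign_permCongr, Equiv.Perm.sign_prodCongrLeft]
  simp

/-- value of the degree cochain of a block on a window of a simplex -/
noncomputable def theta {k e M : ℕ} (g : Fin (k * (e + 1) + e + 1) → ZMod (8 * (M + 1)))
    (ρ : Equiv.Perm (Fin (k * (e + 1) + e + 1))) (i c : Fin (k + 1)) : ℤ :=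
  sig (e + 1) (fun n => lab (qmap (blockOf c
    (fun x => ZMod.toCircle (wseq g ρ (i * (e + 1) + n) x)))))

theorem theta_eq {k e M : ℕ} (g : Fin (k * (e + 1) + e + 1) → ZMod (8 * (M + 1)))
    (ρ : Equiv.Perm (Fin (k * (e + 1) + e + 1))) (i c : Fin (k + 1)) :
    theta g ρ i c = sig (e + 1) (fun n => lab (qmap (fun l =>
      if (ρ (blk k e (c, l)) : ℕ) < i * (e + 1) + n then ZMod.toCircle (g (blk k e (c, l)) + 1)
      else ZMod.toCircle (g (blk k e (c, l)))))) := by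
  unfold theta
  congr 1
  funext n
  congr 2
  funext l
  simp only [blockOf, wseq]
  split_ifs <;> simp

theorem theta_ne {k e M : ℕ} {g : Fin (k * (e + 1) + e + 1) → ZMod (8 * (M + 1))}
    {ρ : Equiv.Perm (Fin (k * (e + 1) + e + 1))} {i c : Fin (k + 1)} (h : theta g ρ i c ≠ 0) :
    theta g ρ i c = 1 ∧ ∀ l, ρ (blk k e (c, l)) = blk k e (i, l) := by
  rw [theta_eq] at h ⊢
  obtain ⟨h1, h2⟩ := degree_ne (fun l => ZMod.toCircle (g (blk k e (c, l))))
    (fun l => ZMod.toCircle (g (blk k e (c, l)) + 1)) (fun l => (ρ (blk k e (c, l)) : ℕ))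
    (i * (e + 1)) (fun l => no_turn_back _) h
  refine ⟨h1, fun l => Fin.ext ?_⟩
  rw [blk_val]
  exact h2 l

theorem theta_diag {k e M : ℕ} (j : ZMod (8 * (M + 1))) (h1 : CLow (ZMod.toCircle j))
    (h2 : CHigh (ZMod.toCircle (j + 1))) (i : Fin (k + 1)) :
    theta (k := k) (e := e) (fun _ => j) 1 i i = 1 := by
  rw [theta_eq]
  exact degree_eq_one (fun _ => ZMod.toCircle j) (fun _ => ZMod.toCircle (j + 1))
    (fun l => ((1 : Equiv.Perm (Fin (k * (e + 1) + e + 1))) (blk k e (i, l)) : ℕ)) (i * (e + 1))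
    (fun _ => h1) (fun _ => h2) (fun l => by rw [Equiv.Perm.one_apply, blk_val])

theorem blk_left_inj {k e : ℕ} {c c' : Fin (k + 1)}
    (h : ∀ l, blk k e (c, l) = blk k e (c', l)) : c = c' :=
  congrArg Prod.fst ((blk k e).injective (h 0))

theorem lower_core (e k : ℕ) (a : Fin (k + 1) → Fin (k + 1)) (b : Fin (k + 1) → Option (Fin (k + 1)))
    (cst : Fin (k + 1) → Fin (e + 1 + 1) → ℝ) (hcst : ∀ i, cst i ≠ 0)
    (s : Fin (k + 1) → ℤ) (hs : ∀ c, s c = 1 ∨ s c = -1) (ha : ∀ i, s (a i) = -1)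
    (hb : ∀ i c, b i = some c → s c = 1) (hdiag : ∀ i, a i = i ∨ b i = some i)
    (huniq : Even (e + 1) ∨ ∀ τ : Equiv.Perm (Fin (k + 1)),
      (∀ i, τ i = a i ∨ b i = some (τ i)) → τ = 1)
    (U : Fin (k + 1) → Set (Fin (k * (e + 1) + e + 1) → Circle)) (hU : ∀ i, IsOpen (U i))
    (hUc : (⋃ i, U i) = Set.univ)
    (h : Fin (k + 1) → (Fin (k * (e + 1) + e + 1) → Circle) × I → Fin (e + 1 + 1) → ℝ)
    (hc : ∀ i, ContinuousOn (h i) (U i ×ˢ Set.univ))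
    (h0 : ∀ i, ∀ x ∈ U i, ∀ t, h i (x, t) ≠ 0)
    (hst : ∀ i, ∀ x ∈ U i, h i (x, 0) = qmap (blockOf (a i) x))
    (hen : ∀ i, ∀ x ∈ U i, h i (x, 1) = (b i).elim (cst i) (fun c => qmap (blockOf c x))) :
    False := by
  have hblk : ∀ c : Fin (k + 1), Continuous
      (fun x : Fin (k * (e + 1) + e + 1) → Circle => qmap (blockOf c x)) := by
    intro c
    refine continuous_qmap.comp (continuous_pi fun l => ?_)
    exact continuous_apply _
  obtain ⟨ε, hε, H, hH, hHe⟩ := vanishing (fun i x => qmap (blockOf (a i) x))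
    (fun i x => (b i).elim (cst i) (fun c => qmap (blockOf c x)))
    (fun i => hblk _)
    (fun i => by
      cases hbi : b i with
      | none => simpa using continuous_const
      | some c => simpa using hblk c)
    (fun i x => qmap_ne _)
    (fun i x => by
      cases hbi : b i with
      | none => simpa using hcst i
      | some c => simpa using qmap_ne _)
    U hU hUc h hc h0 hst hen
  obtain ⟨M, hM⟩ := exists_nat_one_div_lt hε
  let P : (Fin (k * (e + 1) + e + 1) → ZMod (8 * (M + 1))) → Fin (k * (e + 1) + e + 1) → Circle :=
    fun g x => ZMod.toCircle (g x)
  have hcyc := cycle_cob (N := 8 * (M + 1)) (fun w => H (fun n => P (w n)))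
    (fun w w' hw => hH _ _ fun n hn => by rw [hw n hn])
  have hsmall : ∀ g ρ i j, dist (P (wseq g ρ i)) (P (wseq g ρ j)) < ε := by
    intro g ρ i j
    rw [dist_pi_lt_iff hε]
    intro x
    have hd := dist_turn M (g x)
    simp only [P, wseq]
    split_ifs
    · rw [dist_self]; exact hε
    · rw [add_zero]; exact hd.trans_lt hM
    · rw [add_zero, dist_comm]; exact hd.trans_lt hM
    · rw [dist_self]; exact hε
  let z : (Fin (k * (e + 1) + e + 1) → ZMod (8 * (M + 1))) →
      Equiv.Perm (Fin (k * (e + 1) + e + 1)) → Fin (k + 1) → ℤ := fun g ρ i =>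
    (b i).elim 0 (fun c => theta g ρ i c) - theta g ρ i (a i)
  have hterm : ∀ g ρ, cob (k * (e + 1) + e) (fun w => H (fun n => P (w n))) (wseq g ρ) =
      ∏ i, z g ρ i := by
    intro g ρ
    have h1 := hHe (fun n => P (wseq g ρ n)) (hsmall g ρ)
    have h2 : cob (k * (e + 1) + e) (fun w => H (fun n => P (w n))) (wseq g ρ) =
      cob (k * (e + 1) + e) H (fun n => P (wseq g ρ n)) := rfl
    rw [h2, ← h1]
    refine Finset.prod_congr rfl fun i _ => ?_
    simp only [z]
    congr 1
    cases hbi : b i with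
    | none =>
      simp only [Option.elim_none]
      exact sig_zero _ 0 1 (by simp) rfl
    | some c => rfl
  simp only [hterm] at hcyc
  -- analysis of a nonzero factor
  have hne : ∀ i c, b i = some c → c ≠ a i := by
    intro i c hbc he
    have h1 := hb i c hbc
    have h2 := ha i
    rw [he, h2] at h1
    norm_num at h1
  have hexcl : ∀ (g : Fin (k * (e + 1) + e + 1) → ZMod (8 * (M + 1)))
      (ρ : Equiv.Perm (Fin (k * (e + 1) + e + 1))) i c, b i = some c → theta g ρ i (a i) ≠ 0 → theta g ρ i c ≠ 0 → False := by
    intro g ρ i c hbc h1 h2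
    refine hne i c hbc (blk_left_inj (e := e) fun l => ?_)
    exact ρ.injective (((theta_ne h2).2 l).trans ((theta_ne h1).2 l).symm)
  have hfac : ∀ g ρ i, z g ρ i ≠ 0 → ∃ c, (c = a i ∨ b i = some c) ∧ z g ρ i = s c ∧
      ∀ l, ρ (blk k e (c, l)) = blk k e (i, l) := by
    intro g ρ i hz
    by_cases h1 : theta g ρ i (a i) = 0
    · cases hbi : b i with
      | none => simp [z, hbi, h1] at hz
      | some c =>
        have hzc : z g ρ i = theta g ρ i c := by simp [z, hbi, h1]
        rw [hzc] at hz ⊢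
        obtain ⟨h3, h4⟩ := theta_ne hz
        exact ⟨c, Or.inr rfl, by rw [h3, hb i c hbi], h4⟩
    · obtain ⟨h3, h4⟩ := theta_ne h1
      refine ⟨a i, Or.inl rfl, ?_, h4⟩
      rw [ha i]
      cases hbi : b i with
      | none => simp [z, hbi, h3]
      | some c =>
        have : theta g ρ i c = 0 := by
          by_contra h5
          exact hexcl g ρ i c hbi h1 h5
        simp [z, hbi, h3, this]
  have hS : (∏ c, s c) * (∏ c, s c) = 1 := by
    rw [← Finset.prod_mul_distrib]
    refine Finset.prod_eq_one fun c _ => ?_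
    rcases hs c with h | h <;> rw [h] <;> norm_num
  have hval : ∀ g ρ, (Equiv.Perm.sign ρ : ℤ) * ∏ i, z g ρ i ≠ 0 →
      (Equiv.Perm.sign ρ : ℤ) * ∏ i, z g ρ i = ∏ c, s c := by
    intro g ρ hz
    have hz' : ∀ i, z g ρ i ≠ 0 := by
      intro i hi
      apply hz
      rw [Finset.prod_eq_zero (Finset.mem_univ i) hi, mul_zero]
    choose c hc1 hc2 hc3 using fun i => hfac g ρ i (hz' i)
    have hcinj : Function.Injective c := by
      intro i j hij
      refine blk_left_inj (e := e) fun l => ?_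
      rw [← hc3 i l, ← hc3 j l, hij]
    let τ : Equiv.Perm (Fin (k + 1)) := Equiv.ofBijective c (Finite.injective_iff_bijective.1 hcinj)
    have hτ : ∀ i, τ i = c i := fun i => rfl
    have hprod : ∏ i, z g ρ i = ∏ c, s c := by
      rw [← Equiv.prod_comp τ s]
      exact Finset.prod_congr rfl fun i _ => hc2 i
    have hsign : Equiv.Perm.sign ρ = 1 := by
      rw [sign_block ρ τ hc3]
      rcases huniq with he | hu
      · rcases Int.units_eq_one_or (Equiv.Perm.sign τ) with h1 | h1
        · rw [h1, one_pow]
        · rw [h1, he.neg_one_pow]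
      · rw [hu τ hc1, map_one, one_pow]
    rw [hprod, hsign]
    simp
  -- the special term
  obtain ⟨j, hj1, hj2⟩ := exists_turn M
  have hspec : (Equiv.Perm.sign (1 : Equiv.Perm (Fin (k * (e + 1) + e + 1))) : ℤ) *
      ∏ i, z (fun _ => j) 1 i ≠ 0 := by
    rw [Equiv.Perm.sign_one, Units.val_one, one_mul]
    refine Finset.prod_ne_zero_iff.2 fun i _ => ?_
    have hd := theta_diag (k := k) (e := e) j hj1 hj2 i
    rcases hdiag i with h1 | h1
    · cases hbi : b i with
      | none => simp [z, hbi, h1, hd]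
      | some c =>
        have : theta (k := k) (e := e) (fun _ => j) 1 i c = 0 := by
          by_contra h5
          exact hexcl _ _ i c hbi (by rw [h1, hd]; norm_num) h5
        simp [z, hbi, h1, hd, this]
    · have : theta (k := k) (e := e) (fun _ => j) 1 i (a i) = 0 := by
        by_contra h5
        exact hexcl _ _ i i h1 h5 (by rw [hd]; norm_num)
      simp [z, h1, hd, this]
  have hge : ∀ g ρ, 0 ≤ (∏ c, s c) * ((Equiv.Perm.sign ρ : ℤ) * ∏ i, z g ρ i) := by
    intro g ρ
    by_cases hz : (Equiv.Perm.sign ρ : ℤ) * ∏ i, z g ρ i = 0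
    · rw [hz, mul_zero]
    · rw [hval g ρ hz, hS]; norm_num
  have hpos : 0 < ∑ g, ∑ ρ, (∏ c, s c) * ((Equiv.Perm.sign ρ : ℤ) * ∏ i, z g ρ i) := by
    refine Finset.sum_pos' (fun g _ => Finset.sum_nonneg fun ρ _ => hge g ρ)
      ⟨fun _ => j, Finset.mem_univ _, ?_⟩
    refine Finset.sum_pos' (fun ρ _ => hge _ ρ) ⟨1, Finset.mem_univ _, ?_⟩
    rw [hval _ _ hspec, hS]; norm_num
  simp only [← Finset.mul_sum] at hpos
  simp only [hcyc, mul_zero] at hpos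
  exact lt_irrefl _ hpos

end Core

section Geo

theorem motionCover_mono {X : Type*} [TopologicalSpace X] [Nonempty X] {k k' : ℕ} (hk : k' ≤ k)
    (h : HasMotionCover X k') : HasMotionCover X k := by
  obtain ⟨U, hU, hc, hs⟩ := h
  have hpos : 0 < k' := by
    obtain ⟨x⟩ := ‹Nonempty X›
    have : (x, x) ∈ ⋃ i, U i := by rw [hc]; trivial
    obtain ⟨i, -⟩ := Set.mem_iUnion.1 this
    exact i.pos
  let r : Fin k → Fin k' := fun j => ⟨min j (k' - 1), by omega⟩
  refine ⟨fun j => U (r j), fun j => hU _, ?_, fun j => hs (r j)⟩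
  rw [← hc]
  refine Set.Subset.antisymm (Set.iUnion_subset fun j => Set.subset_iUnion U (r j)) ?_
  refine Set.iUnion_subset fun i => ?_
  have hi : r ⟨i, by omega⟩ = i := by
    ext
    simp only [r]
    omega
  intro x hx
  exact Set.mem_iUnion.2 ⟨⟨i, by omega⟩, by rw [hi]; exact hx⟩

/-- nonzero vectors -/
abbrev NZ (d : ℕ) := {v : Fin d → ℝ // v ≠ 0}

theorem nz_linear {d : ℕ} {A : Type*} [TopologicalSpace A] (F G : C(A, NZ d))
    (h : ∀ (x : A) (t : ℝ), 0 ≤ t → t ≤ 1 → (1 - t) • (F x : Fin d → ℝ) + t • (G x : Fin d → ℝ) ≠ 0) :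
    F.Homotopic G := by
  refine ⟨⟨⟨fun p => ⟨(1 - (p.1 : ℝ)) • (F p.2 : Fin d → ℝ) + (p.1 : ℝ) • (G p.2 : Fin d → ℝ),
    h p.2 p.1 p.1.2.1 p.1.2.2⟩, ?_⟩, ?_, ?_⟩⟩
  · refine Continuous.subtype_mk ?_ _
    fun_prop
  · intro x
    apply Subtype.ext
    simp
  · intro x
    apply Subtype.ext
    simp

theorem lower_geo (e k n : ℕ) (a : Fin (k + 1) → Fin (k + 1)) (b : Fin (k + 1) → Option (Fin (k + 1)))
    (cst : Fin (k + 1) → Fin (e + 1 + 1) → ℝ) (hcst : ∀ i, cst i ≠ 0)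
    (s : Fin (k + 1) → ℤ) (hs : ∀ c, s c = 1 ∨ s c = -1) (ha : ∀ i, s (a i) = -1)
    (hb : ∀ i c, b i = some c → s c = 1) (hdiag : ∀ i, a i = i ∨ b i = some i)
    (huniq : Even (e + 1) ∨ ∀ τ : Equiv.Perm (Fin (k + 1)),
      (∀ i, τ i = a i ∨ b i = some (τ i)) → τ = 1)
    (f g : (Fin (k * (e + 1) + e + 1) → Circle) → Fin n → Fin (e + 1 + 1) → ℝ)
    (hf : Continuous f) (hg : Continuous g) (hfi : ∀ x, Function.Injective (f x))
    (hgi : ∀ x, Function.Injective (g x)) (p q : Fin (k + 1) → Fin n) (hpq : ∀ i, p i ≠ q i)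
    (hφ : ∀ i x (t : ℝ), 0 ≤ t → t ≤ 1 →
      (1 - t) • qmap (blockOf (a i) x) + t • (f x (q i) - f x (p i)) ≠ 0)
    (hψ : ∀ i x (t : ℝ), 0 ≤ t → t ≤ 1 →
      (1 - t) • (b i).elim (cst i) (fun c => qmap (blockOf c x)) + t • (g x (q i) - g x (p i)) ≠ 0)
    (hcov : HasMotionCover (Conf (e + 1 + 1) n) (k + 1)) : False := by
  obtain ⟨U, hU, hUc, hsec⟩ := hcov
  let fC : (Fin (k * (e + 1) + e + 1) → Circle) → Conf (e + 1 + 1) n := fun x =>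
    Conf.mk (fun j => WithLp.toLp 2 (f x j)) (fun i j hij => hfi x (by
      have := congrArg WithLp.ofLp hij
      exact this))
  let gC : (Fin (k * (e + 1) + e + 1) → Circle) → Conf (e + 1 + 1) n := fun x =>
    Conf.mk (fun j => WithLp.toLp 2 (g x j)) (fun i j hij => hgi x (by
      have := congrArg WithLp.ofLp hij
      exact this))
  have hfC : Continuous fC := Conf.continuous_mk (by fun_prop) _
  have hgC : Continuous gC := Conf.continuous_mk (by fun_prop) _
  let W : Fin (k + 1) → Set (Fin (k * (e + 1) + e + 1) → Circle) := fun i =>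
    (fun x => (fC x, gC x)) ⁻¹' (U i)
  have hblk : ∀ c : Fin (k + 1), Continuous
      (fun x : Fin (k * (e + 1) + e + 1) → Circle => qmap (blockOf c x)) := by
    intro c
    refine continuous_qmap.comp (continuous_pi fun l => ?_)
    exact continuous_apply _
  have hψc : ∀ i, Continuous (fun x : Fin (k * (e + 1) + e + 1) → Circle =>
      (b i).elim (cst i) (fun c => qmap (blockOf c x))) := by
    intro i
    cases hbi : b i with
    | none => simpa using continuous_const
    | some c => simpa using hblk c
  have hψ0 : ∀ i (x : Fin (k * (e + 1) + e + 1) → Circle),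
      (b i).elim (cst i) (fun c => qmap (blockOf c x)) ≠ 0 := by
    intro i x
    cases hbi : b i with
    | none => simpa using hcst i
    | some c => simpa using qmap_ne _
  have hfi0 : ∀ i x, f x (q i) - f x (p i) ≠ 0 := fun i x h =>
    hpq i (hfi x (sub_eq_zero.1 h)).symm
  have hgi0 : ∀ i x, g x (q i) - g x (p i) ≠ 0 := fun i x h =>
    hpq i (hgi x (sub_eq_zero.1 h)).symm
  have hhom : ∀ i, ∃ h : (Fin (k * (e + 1) + e + 1) → Circle) × I → Fin (e + 1 + 1) → ℝ,
      ContinuousOn h (W i ×ˢ Set.univ) ∧ (∀ x ∈ W i, ∀ t, h (x, t) ≠ 0) ∧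
      (∀ x ∈ W i, h (x, 0) = qmap (blockOf (a i) x)) ∧
      (∀ x ∈ W i, h (x, 1) = (b i).elim (cst i) (fun c => qmap (blockOf c x))) := by
    intro i
    let A1 : C(W i, NZ (e + 1 + 1)) := ⟨fun x => ⟨qmap (blockOf (a i) x.1), qmap_ne _⟩,
      ((hblk (a i)).comp continuous_subtype_val).subtype_mk _⟩
    let A2 : C(W i, NZ (e + 1 + 1)) := ⟨fun x => ⟨f x.1 (q i) - f x.1 (p i), hfi0 i x.1⟩,
      Continuous.subtype_mk (by fun_prop) _⟩
    let A3 : C(W i, NZ (e + 1 + 1)) := ⟨fun x => ⟨g x.1 (q i) - g x.1 (p i), hgi0 i x.1⟩,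
      Continuous.subtype_mk (by fun_prop) _⟩
    let A4 : C(W i, NZ (e + 1 + 1)) :=
      ⟨fun x => ⟨(b i).elim (cst i) (fun c => qmap (blockOf c x.1)), hψ0 i x.1⟩,
      ((hψc i).comp continuous_subtype_val).subtype_mk _⟩
    have H12 : A1.Homotopic A2 := nz_linear _ _ fun x t h1 h2 => hφ i x.1 t h1 h2
    have H43 : A4.Homotopic A3 := nz_linear _ _ fun x t h1 h2 => hψ i x.1 t h1 h2
    have H23 : A2.Homotopic A3 := by
      obtain ⟨sec', hsec'⟩ := hsec i
      let path : I × W i → Conf (e + 1 + 1) n := fun r => sec' ⟨(fC r.2.1, gC r.2.1), r.2.2⟩ r.1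
      have hpath : Continuous path := by
        have h1 : Continuous (fun r : I × W i =>
            (⟨(fC r.2.1, gC r.2.1), r.2.2⟩ : (U i : Set _))) := by
          refine Continuous.subtype_mk ?_ _
          fun_prop
        exact (sec'.continuous.comp h1).eval continuous_fst
      have hpf : Continuous (fun r => (path r).toFun) := Conf.continuous_toFun.comp hpath
      refine ⟨⟨⟨fun r => ⟨WithLp.ofLp ((path r).toFun (q i)) - WithLp.ofLp ((path r).toFun (p i)), ?_⟩,
        ?_⟩, ?_, ?_⟩⟩
      · intro h
        refine hpq i ((path r).inj ?_).symm
        exact WithLp.ofLp_injective 2 (sub_eq_zero.1 h)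
      · refine Continuous.subtype_mk ?_ _
        fun_prop
      · intro x
        apply Subtype.ext
        have := congrArg Prod.fst (hsec' ⟨(fC x.1, gC x.1), x.2⟩)
        simp only at this
        have h2 : path (0, x) = fC x.1 := this
        simp only [h2]
        rfl
      · intro x
        apply Subtype.ext
        have := congrArg Prod.snd (hsec' ⟨(fC x.1, gC x.1), x.2⟩)
        simp only at this
        have h2 : path (1, x) = gC x.1 := this
        simp only [h2]
        rfl
    obtain ⟨F⟩ := (H12.trans H23).trans H43.symm
    classical
    refine ⟨fun r => if hx : r.1 ∈ W i then (F (r.2, ⟨r.1, hx⟩)).1 else 0, ?_, ?_, ?_, ?_⟩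
    · rw [continuousOn_iff_continuous_domRestrict]
      have : Set.domRestrict (W i ×ˢ Set.univ) (fun r : (Fin (k * (e + 1) + e + 1) → Circle) × I =>
          if hx : r.1 ∈ W i then (F (r.2, ⟨r.1, hx⟩)).1 else 0) =
          fun r => (F (r.1.2, ⟨r.1.1, r.2.1⟩)).1 := by
        funext r
        exact dif_pos r.2.1
      rw [this]
      refine continuous_subtype_val.comp (F.continuous.comp ?_)
      refine Continuous.prodMk (by fun_prop) ?_
      refine Continuous.subtype_mk ?_ _
      fun_prop
    · intro x hx t
      simp only [hx, dif_pos]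
      exact (F _).2
    · intro x hx
      simp only [hx, dif_pos]
      rw [F.apply_zero]
      rfl
    · intro x hx
      simp only [hx, dif_pos]
      rw [F.apply_one]
      rfl
  choose h h1 h2 h3 h4 using hhom
  refine lower_core e k a b cst hcst s hs ha hb hdiag huniq W ?_ ?_ h h1 h2 h3 h4
  · intro i
    exact (hU i).preimage (hfC.prodMk hgC)
  · refine Set.eq_univ_of_forall fun x => ?_
    have : (fC x, gC x) ∈ ⋃ i, U i := by rw [hUc]; trivial
    obtain ⟨i, hi⟩ := Set.mem_iUnion.1 this
    exact Set.mem_iUnion.2 ⟨i, hi⟩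

end Geo

section Special

theorem smul_sub_ne {d : ℕ} {u v : Fin d → ℝ} (hu : ‖u‖ = 1) (hv : ‖v‖ = 1) {α β : ℝ}
    (hβ : 0 ≤ β) (h : β < α) : α • u - β • v ≠ 0 := by
  intro h0
  have h1 := congrArg norm (sub_eq_zero.1 h0)
  rw [norm_smul, norm_smul, hu, hv, Real.norm_of_nonneg hβ,
    Real.norm_of_nonneg (hβ.trans h.le)] at h1
  linarith

/-- the vector attached to a block, indexed by natural numbers -/
noncomputable def bvec (k e : ℕ) (c : ℕ) (x : Fin (k * (e + 1) + e + 1) → Circle) :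
    Fin (e + 1 + 1) → ℝ := qmap (blockOf (Fin.ofNat (k + 1) c) x)

theorem bvec_norm (k e c : ℕ) (x : Fin (k * (e + 1) + e + 1) → Circle) :
    ‖bvec k e c x‖ = 1 := qmap_norm _

theorem bvec_continuous (k e c : ℕ) : Continuous (bvec k e c) := by
  refine continuous_qmap.comp (continuous_pi fun l => ?_)
  exact continuous_apply _

theorem bvec_eq (k e : ℕ) (c : Fin (k + 1)) (d : ℕ) (h : (c : ℕ) = d)
    (x : Fin (k * (e + 1) + e + 1) → Circle) : qmap (blockOf c x) = bvec k e d x := by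
  subst h
  unfold bvec
  congr 2
  ext
  simp

theorem ones_norm (e : ℕ) : ‖(fun _ : Fin (e + 1 + 1) => (1 : ℝ))‖ = 1 := by
  rw [pi_norm_const]; simp

/-- configurations with points at distances given by an injective weight -/
theorem radial_injective {n d : ℕ} (r : Fin n → ℝ) (hr : Function.Injective r)
    (hr0 : ∀ j, 0 ≤ r j) (v : Fin n → Fin d → ℝ) (hv : ∀ j, ‖v j‖ = 1) :
    Function.Injective (fun j => r j • v j) := by
  intro j j' h
  apply hr
  have h1 := congrArg norm h
  simpa [norm_smul, hv, abs_of_nonneg (hr0 _)] using h1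

theorem radial_hom {d : ℕ} {u v : Fin d → ℝ} (hu : ‖u‖ = 1) (hv : ‖v‖ = 1) {P Q : ℝ}
    (hP : 0 ≤ P) (hPQ : P < Q) {t : ℝ} (h0 : 0 ≤ t) (h1 : t ≤ 1) :
    (1 - t) • u + t • (Q • u - P • v) ≠ 0 := by
  have : (1 - t) • u + t • (Q • u - P • v) = ((1 - t) + t * Q) • u - (t * P) • v := by
    module
  rw [this]
  refine smul_sub_ne hu hv (by positivity) ?_
  rcases h0.eq_or_lt with rfl | h0
  · simp
  · nlinarith [mul_lt_mul_of_pos_left hPQ h0]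

theorem smul_cont {A : Type*} [TopologicalSpace A] {d : ℕ} (r : ℝ) (F : A → Fin d → ℝ)
    (hF : Continuous F) : Continuous (fun a => r • F a) := by fun_prop

theorem lower_odd (e ν : ℕ) (he : Even (e + 1)) :
    ¬ HasMotionCover (Conf (e + 1 + 1) (ν + 2)) (2 * ν + 1 + 1) := by
  intro hcov
  have hinj : Function.Injective (fun j : Fin (ν + 2) => ((j : ℕ) : ℝ)) := fun i j h => by
    ext; exact Nat.cast_injective (R := ℝ) h
  refine lower_geo e (2 * ν + 1) (ν + 2)
    (fun i => ⟨2 * ((i : ℕ) / 2), by omega⟩)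
    (fun i => some ⟨2 * ((i : ℕ) / 2) + 1, by omega⟩)
    (fun _ _ => 1) (fun i h => ?_)
    (fun c => if (c : ℕ) % 2 = 0 then -1 else 1) (fun c => ?_) (fun i => ?_) (fun i c h => ?_)
    (fun i => ?_) (Or.inl he)
    (fun x j => ((j : ℕ) : ℝ) • bvec (2 * ν + 1) e (2 * ((j : ℕ) - 1)) x)
    (fun x j => ((j : ℕ) : ℝ) • bvec (2 * ν + 1) e (2 * ((j : ℕ) - 1) + 1) x)
    ?_ ?_ (fun x => ?_) (fun x => ?_) (fun _ => 0) (fun i => ⟨(i : ℕ) / 2 + 1, by omega⟩)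
    (fun i => ?_) (fun i x t h0 h1 => ?_) (fun i x t h0 h1 => ?_) hcov
  · exact one_ne_zero (congrFun h 0)
  · split_ifs <;> simp
  · simp
  · obtain rfl := Option.some.inj h
    simp [Nat.add_mod]
  · rcases Nat.mod_two_eq_zero_or_one (i : ℕ) with h | h
    · left; ext; simp only []; omega
    · right; congr 1; ext; simp only []; omega
  · exact continuous_pi fun j => smul_cont _ _ (bvec_continuous _ _ _)
  · exact continuous_pi fun j => smul_cont _ _ (bvec_continuous _ _ _)
  · exact radial_injective _ hinj (fun _ => Nat.cast_nonneg _) _ fun _ => bvec_norm _ _ _ _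
  · exact radial_injective _ hinj (fun _ => Nat.cast_nonneg _) _ fun _ => bvec_norm _ _ _ _
  · intro h
    have := congrArg Fin.val h
    simp at this
  · rw [bvec_eq _ _ _ (2 * ((i : ℕ) / 2 + 1 - 1)) (by simp)]
    exact radial_hom (bvec_norm _ _ _ _) (bvec_norm _ _ _ _) (Nat.cast_nonneg _)
      (by exact_mod_cast Nat.succ_pos _) h0 h1
  · simp only [Option.elim]
    rw [bvec_eq _ _ _ (2 * ((i : ℕ) / 2 + 1 - 1) + 1) (by simp)]
    exact radial_hom (bvec_norm _ _ _ _) (bvec_norm _ _ _ _) (Nat.cast_nonneg _)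
      (by exact_mod_cast Nat.succ_pos _) h0 h1

theorem lower_even (e ν : ℕ) :
    ¬ HasMotionCover (Conf (e + 1 + 1) (ν + 2)) (2 * ν + 1) := by
  intro hcov
  have hinj : Function.Injective (fun j : Fin (ν + 2) => ((j : ℕ) : ℝ)) := fun i j h => by
    ext; exact Nat.cast_injective (R := ℝ) h
  set one : Fin (e + 1 + 1) → ℝ := fun _ => 1 with hone
  have h1n : ‖one‖ = 1 := ones_norm e
  have h10 : one ≠ 0 := fun h => one_ne_zero (congrFun h 0)
  let w : Fin (ν + 2) → ℕ := fun j => if (j : ℕ) = 1 then ν + 2 else j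
  let gv : (Fin (2 * ν * (e + 1) + e + 1) → Circle) → Fin (ν + 2) → Fin (e + 1 + 1) → ℝ :=
    fun x j => if (j : ℕ) = 1 then one else bvec (2 * ν) e (2 * ((j : ℕ) - 1) - 1) x
  have hgv : ∀ x j, ‖gv x j‖ = 1 := by
    intro x j
    simp only [gv]
    split_ifs
    · exact h1n
    · exact bvec_norm _ _ _ _
  have hw : Function.Injective (fun j => ((w j : ℕ) : ℝ)) := by
    intro i j h
    have h : w i = w j := Nat.cast_injective (R := ℝ) h
    ext
    simp only [w] at h
    split_ifs at h <;> omega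
  refine lower_geo e (2 * ν) (ν + 2)
    (fun i => ⟨2 * (((i : ℕ) + 1) / 2), by omega⟩)
    (fun i => if (i : ℕ) % 2 = 1 then some i else none)
    (fun i => if (i : ℕ) = 0 then one else -one) (fun i => ?_)
    (fun c => if (c : ℕ) % 2 = 0 then -1 else 1) (fun c => ?_) (fun i => ?_) (fun i c h => ?_)
    (fun i => ?_) (Or.inr fun τ hτ => ?_)
    (fun x j => ((j : ℕ) : ℝ) • bvec (2 * ν) e (2 * ((j : ℕ) - 1)) x)
    (fun x j => ((w j : ℕ) : ℝ) • gv x j)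
    ?_ ?_ (fun x => ?_) (fun x => ?_)
    (fun i => ⟨if (i : ℕ) % 2 = 0 ∧ 0 < (i : ℕ) then 1 else 0, by split_ifs <;> omega⟩)
    (fun i => ⟨((i : ℕ) + 1) / 2 + 1, by omega⟩)
    (fun i => ?_) (fun i x t h0 h1 => ?_) (fun i x t h0 h1 => ?_) hcov
  · split_ifs
    · exact h10
    · exact neg_ne_zero.2 h10
  · split_ifs <;> simp
  · simp
  · split_ifs at h with hi
    · obtain rfl := Option.some.inj h
      simp [hi]
  · rcases Nat.mod_two_eq_zero_or_one (i : ℕ) with h | h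
    · left; ext; simp only []; omega
    · right; simp [h]
  · have hev : ∀ i : Fin (2 * ν + 1), (i : ℕ) % 2 = 0 → τ i = i := by
      intro i hi
      rcases hτ i with h | h
      · rw [h]; ext; simp only []; omega
      · simp [hi] at h
    ext1 i
    rcases Nat.mod_two_eq_zero_or_one (i : ℕ) with hi | hi
    · rw [hev i hi]; rfl
    · rcases hτ i with h | h
      · exfalso
        have h2 := hev (τ i) (by rw [h]; simp)
        have h3 := τ.injective h2
        have h4 := congrArg Fin.val (h3.symm.trans h)
        simp only [] at h4
        omega
      · simp only [hi, if_true] at h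
        exact (Option.some.inj h).symm
  · exact continuous_pi fun j => smul_cont _ _ (bvec_continuous _ _ _)
  · refine continuous_pi fun j => smul_cont _ _ ?_
    simp only [gv]
    split_ifs
    · exact continuous_const
    · exact bvec_continuous _ _ _
  · exact radial_injective _ hinj (fun _ => Nat.cast_nonneg _) _ fun _ => bvec_norm _ _ _ _
  · exact radial_injective _ hw (fun _ => Nat.cast_nonneg _) _ fun _ => hgv _ _
  · intro h
    have := congrArg Fin.val h
    simp only [] at this
    split_ifs at this <;> omega
  · rw [bvec_eq _ _ _ (2 * (((i : ℕ) + 1) / 2 + 1 - 1)) (by simp)]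
    refine radial_hom (bvec_norm _ _ _ _) (bvec_norm _ _ _ _) (Nat.cast_nonneg _) ?_ h0 h1
    rw [Nat.cast_lt]
    change (if (i : ℕ) % 2 = 0 ∧ 0 < (i : ℕ) then 1 else 0) < ((i : ℕ) + 1) / 2 + 1
    split_ifs <;> omega
  · rcases Nat.mod_two_eq_zero_or_one (i : ℕ) with hi | hi
    · have hb : ¬ ((i : ℕ) % 2 = 1) := by omega
      rw [if_neg hb]
      simp only [Option.elim]
      by_cases hz : (i : ℕ) = 0
      · rw [if_pos hz]
        have hq : gv x ⟨((i : ℕ) + 1) / 2 + 1, by omega⟩ = one := by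
          simp [gv, hz]
        rw [hq]
        refine radial_hom h1n (hgv _ _) (Nat.cast_nonneg _) ?_ h0 h1
        rw [Nat.cast_lt]
        simp [w, hz]
      · rw [if_neg hz]
        have hc : (i : ℕ) % 2 = 0 ∧ 0 < (i : ℕ) := ⟨hi, by omega⟩
        have hp : gv x ⟨if (i : ℕ) % 2 = 0 ∧ 0 < (i : ℕ) then 1 else 0,
            by split_ifs <;> omega⟩ = one := by
          simp only [gv, if_pos hc, if_true]
        rw [hp]
        have key := radial_hom (u := one) (v := gv x ⟨((i : ℕ) + 1) / 2 + 1, by omega⟩) h1n (hgv _ _)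
          (P := (w ⟨((i : ℕ) + 1) / 2 + 1, by omega⟩ : ℕ))
          (Q := (w ⟨if (i : ℕ) % 2 = 0 ∧ 0 < (i : ℕ) then 1 else 0,
            by split_ifs <;> omega⟩ : ℕ)) (Nat.cast_nonneg _) (by
            rw [Nat.cast_lt]
            simp only [w, if_pos hc, if_true]
            split_ifs <;> omega) h0 h1
        intro h
        apply key
        rw [← neg_eq_zero, ← h]
        module
    · rw [if_pos hi]
      simp only [Option.elim]
      have hq : gv x ⟨((i : ℕ) + 1) / 2 + 1, by omega⟩ = qmap (blockOf i x) := by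
        have h1' : ¬ (((i : ℕ) + 1) / 2 + 1 = 1) := by omega
        simp only [gv, if_neg h1']
        rw [bvec_eq]
        omega
      rw [hq]
      refine radial_hom (qmap_norm _) (hgv _ _) (Nat.cast_nonneg _) ?_ h0 h1
      rw [Nat.cast_lt]
      have hc : ¬ ((i : ℕ) % 2 = 0 ∧ 0 < (i : ℕ)) := by omega
      have hq1 : ¬ (((i : ℕ) + 1) / 2 + 1 = 1) := by omega
      simp only [w, if_neg hc, if_neg hq1]
      simp

end Special

theorem conf_nonempty (e n : ℕ) : Nonempty (Conf (e + 1 + 1) n) := by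
  refine ⟨⟨fun j => WithLp.toLp 2 (fun _ => ((j : ℕ) : ℝ)), fun i j h => ?_⟩⟩
  have := congrFun (WithLp.toLp_injective 2 h) 0
  ext
  exact_mod_cast this

theorem tc_eq {X : Type*} [TopologicalSpace X] [Nonempty X] {K : ℕ}
    (h1 : HasMotionCover X (K + 1)) (h2 : ¬ HasMotionCover X K) :
    topologicalComplexity X = ((K + 1 : ℕ) : ℕ∞) := by
  apply le_antisymm
  · exact sInf_le ⟨K + 1, h1, rfl⟩
  · refine le_sInf ?_
    rintro _ ⟨k, hk, rfl⟩
    rw [Nat.cast_le]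
    by_contra hlt
    exact h2 (motionCover_mono (by omega) hk)

/-- for all `n ≥ 2` and `m ≥ 2`, `TC(F(ℝᵐ, n)) = 2n - 1` for `m` odd and
`TC(F(ℝᵐ, n)) = 2n - 2` for `m` even. -/
theorem tc_conf (m n : ℕ) (hm : 2 ≤ m) (hn : 2 ≤ n) :
    topologicalComplexity (Conf m n) = if Odd m then 2 * n - 1 else 2 * n - 2 := by
  obtain ⟨e, rfl⟩ : ∃ e, m = e + 1 + 1 := ⟨m - 2, by omega⟩
  obtain ⟨ν, rfl⟩ : ∃ ν, n = ν + 2 := ⟨n - 2, by omega⟩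
  have := conf_nonempty e (ν + 2)
  split_ifs with h
  · have h1 := upper_general (e + 1 + 1) (ν + 2) hm hn
    have h2 := lower_odd e ν (by
      rcases Nat.even_or_odd (e + 1) with h' | h'
      · exact h'
      · exact absurd h'.add_one (Nat.not_even_iff_odd.2 h))
    have e1 : 2 * (ν + 2) - 1 = 2 * ν + 1 + 1 + 1 := by omega
    rw [e1] at h1
    rw [tc_eq h1 h2, ← e1, ENat.natCast_sub]
  · have h1 := upper_even (e + 1 + 1) (ν + 2) hm hn (Nat.not_odd_iff_even.1 h)
    have h2 := lower_even e ν
    have e1 : 2 * (ν + 2) - 2 = 2 * ν + 1 + 1 := by omega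
    rw [e1] at h1
    rw [tc_eq h1 h2, ← e1, ENat.natCast_sub]
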